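/- arXiv:2505.12270 — 3 statements merged into one kernel-verified Lean document; each statement's English description precedes it below -/
import Mathlib

section
/- For every nonnegative integer n, b^4_{3,2}(16n+9) ≡ 0 (mod 8) and b^4_{3,2}(16n+13) ≡ 0 (mod 8). -/
/-- `coloredRegular k l m n` is the number of `k`-colored partitions of `n` into parts
divisible by neither `l` nor `m`, i.e. the coefficient of `q^n` in
`∏_{j ≥ 1, l ∤ j, m ∤ j} (1 - q^j)^{-k}`.  A `k`-colored partition is a multiset of
(part, color) pairs, where parts are positive integers not divisible by `l` or `m`
and colors range over `{0, …, k-1}`. -/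
noncomputable def coloredRegular (k l m n : ℕ) : ℕ :=
  Nat.card {M : Multiset (ℕ × ℕ) //
    (∀ x ∈ M, ¬ l ∣ x.1 ∧ ¬ m ∣ x.1 ∧ x.2 < k) ∧ (M.map Prod.fst).sum = n}

/-!
Let `f₁ = ∏ (1 - X ^ j)` and `f_d = f₁(X ^ d)`. The generating function of
`b = coloredRegular 4 3 2` is `G ^ 4` with `G = f₂ * f₃ / (f₁ * f₆)`, so that `G ≡ f₁ / f₃` modulo
`2`. Taking derivatives, `n * b n = 4 * [X ^ (n - 1)] (G ^ 3 * G')`, so for odd `n` it suffices that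
the coefficient on the right is even.

Modulo `2`, let `Θ = ∑ X ^ (a ^ 2)` over odd `a > 0`. A reflection preserving `a ^ 2 + 3 * c ^ 2`
fixes, up to signs, only `a = c` and `a = 3 * c`, hence `Θ * Θ(X ^ 3) = Θ ^ 4 + Θ(X ^ 3) ^ 4`. By
the pentagonal number theorem `Θ - Θ(X ^ 9) = X * f₁(X ^ 24)`, which forces
`Θ(X ^ 3) = (X * f₁(X ^ 24)) ^ 3` and then `f₁ ^ 3 * f₃ ^ 3 = f₁ ^ 12 + X * f₃ ^ 12`.

Dividing by `f₃ ^ 6` gives `G ^ 3 = f₃ ^ 6 * (G ^ 12 + X)`, whose derivative yields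
`G ^ 3 * G' = f₁ * f₃ ^ 5`. Extracting even exponents twice with the same relation turns this into
`f₁ ^ 7 / f₃ = (f₁ ^ 4 / f₃) ^ 4 + X * (f₁ * f₃ ^ 2) ^ 4`, supported on exponents `0, 1` modulo `4`.
-/

open PowerSeries Finset

section SetSeries

variable {R : Type*} [CommRing R]

/-- The power series `∑_{n ∈ s} X ^ n`. -/
noncomputable def setSeries (R : Type*) [CommRing R] (s : Set ℕ) : R⟦X⟧ :=
  PowerSeries.mk (s.indicator 1)

open Classical in
lemma coeff_setSeries (s : Set ℕ) (n : ℕ) :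
    coeff n (setSeries R s) = if n ∈ s then 1 else 0 := by
  simp [setSeries, Set.indicator_apply]

lemma setSeries_union {s t : Set ℕ} (h : Disjoint s t) :
    setSeries R (s ∪ t) = setSeries R s + setSeries R t := by
  ext n
  simp only [setSeries, coeff_mk, map_add, Set.indicator_union_of_disjoint h]

lemma X_mul_setSeries_range {ι : Type*} (u : ι → ℕ) :
    X * setSeries R (Set.range u) = setSeries R (Set.range fun i => u i + 1) := by
  classical
  ext (_ | n) <;> simp [coeff_setSeries, coeff_succ_X_mul]

lemma expand_setSeries_range {ι : Type*} {d : ℕ} (hd : d ≠ 0) (u : ι → ℕ) :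
    expand d hd (setSeries R (Set.range u)) = setSeries R (Set.range fun i => d * u i) := by
  classical
  ext n
  by_cases hn : d ∣ n
  · obtain ⟨m, rfl⟩ := hn
    simp [coeff_setSeries, hd]
  · rw [coeff_expand_of_not_dvd _ _ _ hn, coeff_setSeries, if_neg]
    rintro ⟨i, rfl⟩
    exact hn (dvd_mul_right d _)

lemma coeff_setSeries_range {ι : Type*} {u : ι → ℕ} (hu : u.Injective) (n : ℕ) :
    coeff n (setSeries R (Set.range u)) = ({i | u i = n}.ncard : R) := by
  rw [coeff_setSeries]
  split_ifs with h
  · obtain ⟨i, rfl⟩ := h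
    simp [hu.eq_iff]
  · have : {i | u i = n} = ∅ := Set.eq_empty_of_forall_notMem fun i hi => h ⟨i, hi⟩
    simp [this]

lemma image_prodMap_setOf_add_eq {ι κ : Type*} (u : ι → ℕ) (v : κ → ℕ) (n : ℕ) :
    Prod.map u v '' {p | u p.1 + v p.2 = n} =
      {p | p ∈ HasAntidiagonal.antidiagonal n ∧ p.1 ∈ Set.range u ∧ p.2 ∈ Set.range v} := by
  ext ⟨i, j⟩
  simp only [Set.mem_image, Set.mem_ofPred_eq, HasAntidiagonal.mem_antidiagonal, Prod.exists,
    Prod.map_apply, Prod.mk.injEq, Set.mem_range]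
  grind

lemma finite_setOf_add_eq {ι κ : Type*} {u : ι → ℕ} {v : κ → ℕ} (hu : u.Injective)
    (hv : v.Injective) (n : ℕ) : {p : ι × κ | u p.1 + v p.2 = n}.Finite := by
  refine Set.Finite.of_finite_image ?_ (hu.prodMap hv).injOn
  rw [image_prodMap_setOf_add_eq]
  exact (HasAntidiagonal.antidiagonal n).finite_toSet.subset fun p hp => hp.1

lemma coeff_setSeries_range_mul {ι κ : Type*} {u : ι → ℕ} {v : κ → ℕ} (hu : u.Injective)
    (hv : v.Injective) (n : ℕ) :
    coeff n (setSeries R (Set.range u) * setSeries R (Set.range v)) =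
      ({p : ι × κ | u p.1 + v p.2 = n}.ncard : R) := by
  classical
  rw [← Set.ncard_image_of_injective _ (hu.prodMap hv), image_prodMap_setOf_add_eq, coeff_mul]
  simp_rw [coeff_setSeries, ite_zero_mul_ite_zero, mul_one, sum_boole]
  rw [← Set.ncard_coe_finset, coe_filter]

end SetSeries

lemma natCast_ncard_eq_ncard_fixedPoints {α : Type*} {σ : α → α} (hσ : σ.Involutive) {s : Set α}
    (hs : s.Finite) (hmaps : Set.MapsTo σ s s) :
    (s.ncard : ZMod 2) = ({x ∈ s | σ x = x}.ncard : ZMod 2) := by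
  classical
  lift s to Finset α using hs
  have hmoved : (#{x ∈ s | ¬ σ x = x} : ZMod 2) = 0 := by
    rw [card_eq_sum_ones, Nat.cast_sum]
    refine sum_involution (fun x _ => σ x) (fun _ _ => by decide) (fun x hx _ => ?_)
      (fun x hx => ?_) fun x _ => hσ x
    · exact (mem_filter.1 hx).2
    · rw [mem_filter] at hx ⊢
      exact ⟨hmaps hx.1, fun h => hx.2 (hσ.injective h)⟩
  have hfixed : {x ∈ (s : Set α) | σ x = x} = ↑(s.filter fun x => σ x = x) := by simp
  rw [hfixed, Set.ncard_coe_finset, Set.ncard_coe_finset,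
    ← card_filter_add_card_filter_not (s := s) fun x => σ x = x, Nat.cast_add, hmoved, add_zero]

lemma pow_prime_pow_eq_expand {p : ℕ} [hp : Fact p.Prime] (f : (ZMod p)⟦X⟧) (k : ℕ) :
    f ^ p ^ k = expand (p ^ k) (pow_ne_zero k hp.out.ne_zero) f := by
  have h := MvPowerSeries.map_iterateFrobenius_expand p hp.out.ne_zero f k
  rw [Subsingleton.elim (iterateFrobenius (ZMod p) p k) (RingHom.id _), MvPowerSeries.map_id] at h
  exact h.symm

lemma sq_eq_expand (f : (ZMod 2)⟦X⟧) : f ^ 2 = expand 2 two_ne_zero f :=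
  pow_prime_pow_eq_expand f 1

lemma pow_four_eq_expand (f : (ZMod 2)⟦X⟧) : f ^ 4 = expand 4 four_ne_zero f :=
  pow_prime_pow_eq_expand f 2

lemma expand_injective {R : Type*} [CommRing R] {d : ℕ} (hd : d ≠ 0) :
    Function.Injective (expand d hd : R⟦X⟧ → R⟦X⟧) := fun f g h => by
  ext n
  rw [← coeff_expand_mul d hd f, h, coeff_expand_mul]

section OddSquares

/-- The squares of the odd positive integers, each one written once as `(4 * x + 1) ^ 2`
with `x : ℤ`. -/
def oddSquare (x : ℤ) : ℕ := (4 * x + 1).natAbs ^ 2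

@[simp]
lemma natCast_oddSquare (x : ℤ) : (oddSquare x : ℤ) = (4 * x + 1) ^ 2 := by
  simp [oddSquare]

lemma oddSquare_injective : Function.Injective oddSquare := fun x y h => by
  have h := (sq_eq_sq_iff_abs_eq_abs _ _).1 ((natCast_oddSquare x).symm.trans
    ((congrArg Nat.cast h).trans (natCast_oddSquare y)))
  rcases abs_eq_abs.1 h with h | h <;> lia

lemma mem_range_oddSquare {n : ℕ} : n ∈ Set.range oddSquare ↔ ∃ a : ℤ, Odd a ∧ a ^ 2 = n := by
  constructor
  · rintro ⟨x, rfl⟩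
    exact ⟨4 * x + 1, ⟨2 * x, by ring⟩, (natCast_oddSquare x).symm⟩
  · rintro ⟨a, ha, han⟩
    have hodd : a % 2 = 1 := Int.odd_iff.1 ha
    rcases (by lia : a % 4 = 1 ∨ a % 4 = 3) with h | h
    · refine ⟨a / 4, ?_⟩
      zify
      rw [natCast_oddSquare, ← han, show 4 * (a / 4) + 1 = a by lia]
    · refine ⟨-a / 4, ?_⟩
      zify
      rw [natCast_oddSquare, ← han, show 4 * (-a / 4) + 1 = -a by lia, neg_sq]

/-- The isometry of `a ^ 2 + 3 * b ^ 2` that reflects `(a, b)` to `±((3 * b - a) / 2, (a + b) / 2)`,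
in the coordinates `a = 4 * x + 1`, `b = 4 * y + 1`; the sign is the one that keeps both entries
congruent to `1` modulo `4`. -/
def reflection (p : ℤ × ℤ) : ℤ × ℤ :=
  if Even (p.1 + p.2) then ((3 * p.2 - p.1) / 2, (p.1 + p.2) / 2)
  else ((p.1 - 3 * p.2 - 1) / 2, -(p.1 + p.2 + 1) / 2)

lemma reflection_involutive : Function.Involutive reflection := by
  rintro ⟨x, y⟩
  grind [reflection]

lemma reflection_eq_self_iff (x y : ℤ) : reflection (x, y) = (x, y) ↔ x = y ∨ x = -3 * y - 1 := by
  grind [reflection]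

lemma oddSquare_add_three_mul_oddSquare_reflection (p : ℤ × ℤ) :
    oddSquare (reflection p).1 + 3 * oddSquare (reflection p).2 =
      oddSquare p.1 + 3 * oddSquare p.2 := by
  obtain ⟨x, y⟩ := p
  zify
  simp only [natCast_oddSquare, reflection]
  split_ifs with h
  · obtain ⟨k, hk⟩ := h
    obtain rfl : x = k + k - y := by lia
    rw [show (3 * y - (k + k - y)) / 2 = 2 * y - k by lia, show (k + k - y + y) / 2 = k by lia]
    ring
  · obtain ⟨k, hk⟩ := Int.not_even_iff_odd.1 h
    obtain rfl : x = 2 * k + 1 - y := by lia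
    rw [show (2 * k + 1 - y - 3 * y - 1) / 2 = k - 2 * y by lia,
      show -(2 * k + 1 - y + y + 1) / 2 = -k - 1 by lia]
    ring

lemma ncard_fixedPoints_reflection (n : ℕ) :
    {p ∈ {p : ℤ × ℤ | oddSquare p.1 + 3 * oddSquare p.2 = n} | reflection p = p}.ncard =
      {x | 4 * oddSquare x = n}.ncard + {y | 4 * (3 * oddSquare y) = n}.ncard := by
  have hfixed : {p ∈ {p : ℤ × ℤ | oddSquare p.1 + 3 * oddSquare p.2 = n} | reflection p = p} =
      (fun x => (x, x)) '' {x | 4 * oddSquare x = n} ∪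
        (fun y => (-3 * y - 1, y)) '' {y | 4 * (3 * oddSquare y) = n} := by
    have hsquare (y : ℤ) : oddSquare (-3 * y - 1) = 9 * oddSquare y := by
      zify; simp only [natCast_oddSquare]; ring
    ext ⟨x, y⟩
    simp only [Set.mem_ofPred_eq, reflection_eq_self_iff, Set.mem_union, Set.mem_image,
      Prod.mk.injEq]
    grind
  have hdisj : Disjoint ((fun x : ℤ => (x, x)) '' {x | 4 * oddSquare x = n})
      ((fun y : ℤ => (-3 * y - 1, y)) '' {y | 4 * (3 * oddSquare y) = n}) := by
    rw [Set.disjoint_left]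
    rintro _ ⟨x, -, rfl⟩ ⟨y, -, hy⟩
    simp only [Prod.mk.injEq] at hy
    lia
  have hdiag : Function.Injective fun x : ℤ => (x, x) := fun _ _ h => congrArg Prod.snd h
  have hline : Function.Injective fun y : ℤ => (-3 * y - 1, y) := fun _ _ h => congrArg Prod.snd h
  have hfin := (finite_setOf_add_eq oddSquare_injective
    ((mul_right_injective₀ three_ne_zero).comp oddSquare_injective) n).sep fun p => reflection p = p
  simp only [Function.comp_apply] at hfin
  rw [hfixed] at hfin ⊢
  rw [Set.ncard_union_eq hdisj (hfin.subset Set.subset_union_left)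
    (hfin.subset Set.subset_union_right), Set.ncard_image_of_injective _ hdiag,
    Set.ncard_image_of_injective _ hline]

/-- `∑ X ^ (a ^ 2)` over the odd positive integers `a`, modulo two. -/
noncomputable def oddTheta : (ZMod 2)⟦X⟧ := setSeries (ZMod 2) (Set.range oddSquare)

theorem oddTheta_mul_expand_three :
    oddTheta * expand 3 three_ne_zero oddTheta =
      oddTheta ^ 4 + expand 3 three_ne_zero oddTheta ^ 4 := by
  have hmul {d : ℕ} (hd : d ≠ 0) {u : ℤ → ℕ} (hu : u.Injective) :
      Function.Injective fun x => d * u x := (mul_right_injective₀ hd).comp hu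
  have h3 := hmul three_ne_zero oddSquare_injective
  simp only [pow_four_eq_expand, oddTheta, expand_setSeries_range]
  ext n
  rw [coeff_setSeries_range_mul oddSquare_injective h3, map_add,
    coeff_setSeries_range (hmul four_ne_zero oddSquare_injective),
    coeff_setSeries_range (hmul four_ne_zero h3),
    natCast_ncard_eq_ncard_fixedPoints reflection_involutive
      (finite_setOf_add_eq oddSquare_injective h3 n)
      fun p hp => (oddSquare_add_three_mul_oddSquare_reflection p).trans hp,
    ncard_fixedPoints_reflection, Nat.cast_add]

end OddSquares

section Pentagonal

variable {R S : Type*} [CommRing R] [CommRing S]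

lemma map_pentagonalSeries (f : R →+* S) :
    PowerSeries.map f (pentagonalSeries R) = pentagonalSeries S := by
  ext n
  rw [coeff_map]
  by_cases h : n ∈ Set.range pentagonal
  · obtain ⟨k, rfl⟩ := h
    rw [coeff_pentagonalSeries_pentagonal, coeff_pentagonalSeries_pentagonal, map_intCast]
  · rw [coeff_pentagonalSeries_eq_zero _ h, coeff_pentagonalSeries_eq_zero _ h, map_zero]

lemma constantCoeff_pentagonalSeries : constantCoeff (pentagonalSeries R) = 1 := by
  have h := coeff_pentagonalSeries_pentagonal R 0
  rwa [show pentagonal 0 = 0 from rfl, coeff_zero_eq_constantCoeff_apply, Int.negOnePow_zero,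
    Units.val_one, Int.cast_one] at h

lemma isUnit_pentagonalSeries : IsUnit (pentagonalSeries R) :=
  isUnit_iff_constantCoeff.2 (by rw [constantCoeff_pentagonalSeries]; exact isUnit_one)

lemma pentagonalSeries_zmod_two :
    pentagonalSeries (ZMod 2) = setSeries (ZMod 2) (Set.range pentagonal) := by
  ext n
  rw [coeff_setSeries]
  split_ifs with h
  · obtain ⟨k, rfl⟩ := h
    simp [coeff_pentagonalSeries_pentagonal]
  · exact coeff_pentagonalSeries_eq_zero _ h

lemma natCast_twentyFour_mul_pentagonal_add_one (k : ℤ) :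
    ((24 * pentagonal k + 1 : ℕ) : ℤ) = (6 * k - 1) ^ 2 := by
  push_cast
  linear_combination 12 * two_mul_natCast_pentagonal k

lemma mem_range_twentyFour_mul_pentagonal_add_one {n : ℕ} :
    n ∈ Set.range (fun k => 24 * pentagonal k + 1) ↔ ∃ a : ℤ, Odd a ∧ ¬ 3 ∣ a ∧ a ^ 2 = n := by
  constructor
  · rintro ⟨k, rfl⟩
    exact ⟨6 * k - 1, ⟨3 * k - 1, by ring⟩, by lia,
      (natCast_twentyFour_mul_pentagonal_add_one k).symm⟩
  · rintro ⟨a, ⟨c, rfl⟩, h3, han⟩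
    rcases (by lia : c % 3 = 2 ∨ c % 3 = 0) with h | h
    · refine ⟨(c + 1) / 3, Nat.cast_injective (R := ℤ) ?_⟩
      rw [natCast_twentyFour_mul_pentagonal_add_one, ← han]
      congr 1
      lia
    · refine ⟨-(c / 3), Nat.cast_injective (R := ℤ) ?_⟩
      rw [natCast_twentyFour_mul_pentagonal_add_one, ← han, ← neg_sq]
      congr 1
      lia

lemma mem_range_nine_mul_oddSquare {n : ℕ} :
    n ∈ Set.range (fun x => 9 * oddSquare x) ↔ ∃ a : ℤ, Odd a ∧ 3 ∣ a ∧ a ^ 2 = n := by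
  constructor
  · rintro ⟨x, rfl⟩
    refine ⟨3 * (4 * x + 1), ⟨6 * x + 1, by ring⟩, dvd_mul_right _ _, ?_⟩
    push_cast
    rw [natCast_oddSquare]
    ring
  · rintro ⟨_, ha, ⟨a, rfl⟩, han⟩
    obtain ⟨x, hx⟩ := mem_range_oddSquare.2 ⟨a, (Int.odd_mul.1 ha).2, (Int.natAbs_sq a).symm⟩
    refine ⟨x, Nat.cast_injective (R := ℤ) ?_⟩
    simp only [hx, ← han, Nat.cast_mul, Nat.cast_pow, Int.natCast_natAbs, sq_abs]
    ring

lemma range_oddSquare_eq_union :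
    Set.range oddSquare =
      (Set.range fun k => 24 * pentagonal k + 1) ∪ Set.range fun x => 9 * oddSquare x := by
  ext n
  rw [Set.mem_union, mem_range_oddSquare, mem_range_twentyFour_mul_pentagonal_add_one,
    mem_range_nine_mul_oddSquare]
  grind

lemma disjoint_range_pentagonal_range_oddSquare :
    Disjoint (Set.range fun k => 24 * pentagonal k + 1) (Set.range fun x => 9 * oddSquare x) := by
  rw [Set.disjoint_left]
  intro n hn hn'
  obtain ⟨a, -, ha, han⟩ := mem_range_twentyFour_mul_pentagonal_add_one.1 hn
  obtain ⟨c, -, hc, hcn⟩ := mem_range_nine_mul_oddSquare.1 hn'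
  rcases sq_eq_sq_iff_eq_or_eq_neg.1 (han.trans hcn.symm) with rfl | rfl
  · exact ha hc
  · exact ha (dvd_neg.2 hc)

end Pentagonal

section ModTwo

local notation "φ" => pentagonalSeries (ZMod 2)

lemma two_eq_zero_powerSeries_zmod_two : (2 : (ZMod 2)⟦X⟧) = 0 := by
  rw [← map_ofNat (C (R := ZMod 2)) 2, show (OfNat.ofNat 2 : ZMod 2) = 0 from rfl, map_zero]

lemma X_mul_expand_pentagonalSeries_add_expand_oddTheta :
    X * expand 24 (by decide) φ + expand 9 (by decide) oddTheta = oddTheta := by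
  rw [oddTheta, pentagonalSeries_zmod_two, expand_setSeries_range, X_mul_setSeries_range,
    expand_setSeries_range, ← setSeries_union disjoint_range_pentagonal_range_oddSquare,
    ← range_oddSquare_eq_union]

lemma expand_three_oddTheta :
    expand 3 three_ne_zero oddTheta = (X * expand 24 (by decide) φ) ^ 3 := by
  have hne : X * expand 24 (by decide) φ ≠ 0 :=
    mul_ne_zero X_ne_zero (isUnit_pentagonalSeries.map (expand _ _)).ne_zero
  have hquartic := oddTheta_mul_expand_three
  have hexpand := congrArg (expand 3 three_ne_zero) hquartic
  simp only [map_mul, map_add, map_pow, ← expand_mul, Nat.reduceMul] at hexpand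
  rw [eq_sub_of_add_eq X_mul_expand_pentagonalSeries_add_expand_oddTheta] at hne ⊢
  set u := oddTheta
  set w := expand 9 (by decide) oddTheta
  apply mul_left_cancel₀ hne
  linear_combination hquartic - hexpand +
    (2 * u ^ 3 * w - 3 * u ^ 2 * w ^ 2 + 2 * u * w ^ 3 - w ^ 4) * two_eq_zero_powerSeries_zmod_two

theorem pentagonalSeries_pow_three_mul_expand_three :
    φ ^ 3 * expand 3 three_ne_zero φ ^ 3 = φ ^ 12 + X * expand 3 three_ne_zero φ ^ 12 := by
  have h := congrArg (expand 3 three_ne_zero) oddTheta_mul_expand_three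
  simp only [map_mul, map_add, map_pow, expand_three_oddTheta, expand_X, ← expand_mul,
    Nat.reduceMul] at h
  apply expand_injective (d := 24) (by decide)
  simp only [map_mul, map_add, map_pow, expand_X, ← expand_mul, Nat.reduceMul]
  apply mul_left_cancel₀ (pow_ne_zero 12 X_ne_zero)
  linear_combination h

lemma coeff_X_mul_expand_of_mod_ne {R : Type*} [CommRing R] {d n : ℕ} (hd : d ≠ 0) (f : R⟦X⟧)
    (hn : n % d ≠ 1 % d) : coeff n (X * expand d hd f) = 0 := by
  cases n with
  | zero => simp
  | succ n =>
    rw [coeff_succ_X_mul, coeff_expand_of_not_dvd]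
    rintro ⟨k, rfl⟩
    exact hn (by simp)

lemma coeff_two_mul_sq_add_X_mul_sq (f g : (ZMod 2)⟦X⟧) (m : ℕ) :
    coeff (2 * m) (f ^ 2 + X * g ^ 2) = coeff m f := by
  rw [sq_eq_expand, sq_eq_expand, map_add, coeff_expand_mul,
    coeff_X_mul_expand_of_mod_ne _ _ (by lia), add_zero]

section CubicRelation

variable {a b : (ZMod 2)⟦X⟧} (h : a ^ 3 * b ^ 3 = a ^ 12 + X * b ^ 12)

include h

lemma pow_three_mul_derivative_of_mul_eq {g : (ZMod 2)⟦X⟧} (hb : b ≠ 0) (hg : g * b = a) :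
    g ^ 3 * d⁄dX (ZMod 2) g = a * b ^ 5 := by
  subst hg
  have hcube : g ^ 3 = b ^ 6 * (g ^ 12 + X) :=
    mul_left_cancel₀ (pow_ne_zero 6 hb) (by linear_combination h)
  have hderiv := congrArg (d⁄dX (ZMod 2)) hcube
  simp only [Derivation.leibniz, Derivation.leibniz_pow, map_add, smul_eq_mul, nsmul_eq_mul,
    derivative_X] at hderiv
  linear_combination g * hderiv + (6 * b ^ 6 * g ^ 12 * d⁄dX (ZMod 2) g - g ^ 3 * d⁄dX (ZMod 2) g
    + 3 * g * (g ^ 12 + X) * b ^ 5 * d⁄dX (ZMod 2) b) * two_eq_zero_powerSeries_zmod_two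

lemma coeff_mul_pow_five (ha : constantCoeff a ≠ 0) (hb : constantCoeff b ≠ 0) {m : ℕ}
    (hm : 2 ≤ m % 4) : coeff (4 * m) (a * b ^ 5) = 0 := by
  obtain ⟨A, hA⟩ : ∃ A, a * A = 1 := ⟨a⁻¹, PowerSeries.mul_inv_cancel a ha⟩
  obtain ⟨B, hB⟩ : ∃ B, b * B = 1 := ⟨b⁻¹, PowerSeries.mul_inv_cancel b hb⟩
  have hsplit : a * b ^ 5 = (a ^ 5 * b) ^ 2 + X * (b ^ 7 * A) ^ 2 := by
    linear_combination b ^ 2 * A ^ 2 * h + (a ^ 10 * b ^ 2 - a * b ^ 5) * (a * A + 1) * hA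
  have heven : a ^ 5 * b = (a ^ 7 * B) ^ 2 + X * (a * b ^ 5) ^ 2 := by
    linear_combination a ^ 2 * B ^ 2 * h + (X * a ^ 2 * b ^ 10 - a ^ 5 * b) * (b * B + 1) * hB
  have hfourth : a ^ 7 * B = (a ^ 4 * B) ^ 4 + X * (a * b ^ 2) ^ 4 := by
    linear_combination a ^ 4 * B ^ 4 * h +
      (X * a ^ 4 * b ^ 8 * (b ^ 2 * B ^ 2 + 1) * (b * B + 1) -
        a ^ 7 * B * (b ^ 2 * B ^ 2 + b * B + 1)) * hB
  rw [show 4 * m = 2 * (2 * m) by ring, hsplit, coeff_two_mul_sq_add_X_mul_sq, heven,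
    coeff_two_mul_sq_add_X_mul_sq, hfourth, map_add, pow_four_eq_expand (_ * B),
    pow_four_eq_expand (_ * b ^ 2), coeff_expand_of_not_dvd _ _ _ (by lia), zero_add,
    coeff_X_mul_expand_of_mod_ne _ _ (by lia)]

end CubicRelation

theorem coeff_pow_three_mul_derivative {g : (ZMod 2)⟦X⟧} (hg : g * expand 3 three_ne_zero φ = φ)
    {m : ℕ} (hm : 2 ≤ m % 4) : coeff (4 * m) (g ^ 3 * d⁄dX (ZMod 2) g) = 0 := by
  have hφ : constantCoeff φ ≠ 0 := by simp [constantCoeff_pentagonalSeries]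
  have hφ3 : constantCoeff (expand 3 three_ne_zero φ) ≠ 0 := by rwa [constantCoeff_expand]
  rw [pow_three_mul_derivative_of_mul_eq pentagonalSeries_pow_three_mul_expand_three
    (fun h => hφ3 (by simp [h])) hg]
  exact coeff_mul_pow_five pentagonalSeries_pow_three_mul_expand_three hφ hφ3 hm

end ModTwo

section WeightedMultisets

variable {ι : Type*} {w : ι → ℕ}

/-- The multisets of elements of `s` of total weight `n`: the partitions of `n` whose parts are
labelled by `s`, where `w i` is the size of the part labelled `i`. -/
def weightedMultisets (w : ι → ℕ) (s : Set ι) (n : ℕ) : Set (Multiset ι) :=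
  {M | (∀ i ∈ M, i ∈ s) ∧ (M.map w).sum = n}

lemma weightedMultisets_eq_of_le (s : Set ι) {n N : ℕ} (hn : n ≤ N) :
    weightedMultisets w s n = weightedMultisets w {i ∈ s | w i ≤ N} n := by
  ext M
  refine ⟨fun ⟨hs, hsum⟩ => ⟨fun i hi => ⟨hs i hi, ?_⟩, hsum⟩,
    fun ⟨hs, hsum⟩ => ⟨fun i hi => (hs i hi).1, hsum⟩⟩
  exact (Multiset.le_sum_of_mem (Multiset.mem_map_of_mem w hi)).trans (hsum.trans_le hn)

lemma weightedMultisets_insert_of_lt (s : Set ι) {a : ι} {n : ℕ} (hn : n < w a) :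
    weightedMultisets w (insert a s) n = weightedMultisets w s n := by
  rw [weightedMultisets_eq_of_le (insert a s) le_rfl, weightedMultisets_eq_of_le s le_rfl]
  congr 1
  grind

lemma weightedMultisets_insert_add (s : Set ι) (a : ι) (n : ℕ) :
    weightedMultisets w (insert a s) (n + w a) =
      weightedMultisets w s (n + w a) ∪
        Multiset.cons a '' weightedMultisets w (insert a s) n := by
  ext M
  simp only [weightedMultisets, Set.mem_union, Set.mem_ofPred_eq, Set.mem_image]
  constructor
  · rintro ⟨hs, hsum⟩
    by_cases haM : a ∈ M
    · obtain ⟨M, rfl⟩ := Multiset.exists_cons_of_mem haM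
      rw [Multiset.map_cons, Multiset.sum_cons, add_comm, add_left_inj] at hsum
      exact .inr ⟨M, ⟨fun i hi => hs i (Multiset.mem_cons_of_mem hi), hsum⟩, rfl⟩
    · exact .inl ⟨fun i hi => (hs i hi).resolve_left fun h => haM (h ▸ hi), hsum⟩
  · rintro (⟨hs, hsum⟩ | ⟨M, ⟨hs, hsum⟩, rfl⟩)
    · exact ⟨fun i hi => .inr (hs i hi), hsum⟩
    · refine ⟨fun i hi => ?_, by rw [Multiset.map_cons, Multiset.sum_cons, hsum, add_comm]⟩
      exact (Multiset.mem_cons.1 hi).elim .inl (hs i)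

lemma disjoint_weightedMultisets_image_cons {s t : Set ι} {a : ι} (ha : a ∉ s) (m n : ℕ) :
    Disjoint (weightedMultisets w s m) (Multiset.cons a '' weightedMultisets w t n) := by
  rw [Set.disjoint_left]
  rintro _ ⟨hs, -⟩ ⟨M, -, rfl⟩
  exact ha (hs a (Multiset.mem_cons_self a M))

lemma finite_weightedMultisets {s : Set ι} (hs : s.Finite) (hw : ∀ i ∈ s, w i ≠ 0) (n : ℕ) :
    (weightedMultisets w s n).Finite := by
  classical
  lift s to Finset ι using hs
  refine (Set.finite_Iic (n • s.val)).subset fun M ⟨hM, hsum⟩ => Multiset.le_iff_count.2 fun i => ?_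
  by_cases hi : i ∈ M
  · have hcard : M.card ≤ (M.map w).sum := by
      simpa using Multiset.card_nsmul_le_sum (s := M.map w) (a := 1) (by
        simpa [Nat.one_le_iff_ne_zero] using fun i hi => hw i (hM i hi))
    rw [Multiset.count_nsmul, Multiset.count_eq_one_of_mem s.nodup (hM i hi), mul_one]
    exact (Multiset.count_le_card i M).trans (hcard.trans_eq hsum)
  · rw [Multiset.count_eq_zero_of_notMem hi]
    exact Nat.zero_le _

variable {R : Type*} [CommRing R]

/-- The generating function of the numbers of multisets of elements of `s` of given weight. -/
noncomputable def multisetSeries (R : Type*) [CommRing R] (w : ι → ℕ) (s : Set ι) : R⟦X⟧ :=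
  PowerSeries.mk fun n => ((weightedMultisets w s n).ncard : R)

lemma coeff_multisetSeries (s : Set ι) (n : ℕ) :
    coeff n (multisetSeries R w s) = ((weightedMultisets w s n).ncard : R) :=
  coeff_mk _ _

lemma multisetSeries_empty : multisetSeries R w ∅ = 1 := by
  ext n
  have h : weightedMultisets w ∅ n = if n = 0 then {0} else ∅ := by
    ext M
    simp only [weightedMultisets, Set.mem_empty_iff_false, imp_false,
      ← Multiset.eq_zero_iff_forall_notMem, Set.mem_ofPred_eq]
    split_ifs with hn <;> simp +contextual [hn, eq_comm]
  rw [coeff_multisetSeries, h, coeff_one]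
  split_ifs <;> simp

lemma multisetSeries_insert_mul {s : Set ι} {a : ι} (ha : a ∉ s) (hs : s.Finite)
    (hw : ∀ i ∈ insert a s, w i ≠ 0) :
    multisetSeries R w (insert a s) * (1 - X ^ w a) = multisetSeries R w s := by
  ext n
  rw [mul_sub, mul_one, map_sub, coeff_mul_X_pow']
  split_ifs with hn
  · obtain ⟨m, rfl⟩ := Nat.exists_eq_add_of_le' hn
    simp only [coeff_multisetSeries, Nat.add_sub_cancel]
    rw [weightedMultisets_insert_add, Set.ncard_union_eq
      (disjoint_weightedMultisets_image_cons ha _ _)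
      (finite_weightedMultisets hs (fun i hi => hw i (.inr hi)) _)
      ((finite_weightedMultisets (hs.insert a) hw _).image _),
      Set.ncard_image_of_injective _ fun _ _ => (Multiset.cons_inj_right a).1]
    push_cast
    ring
  · rw [sub_zero, coeff_multisetSeries, coeff_multisetSeries,
      weightedMultisets_insert_of_lt s (lt_of_not_ge hn)]

theorem multisetSeries_mul_prod_one_sub_X_pow (s : Finset ι) (hw : ∀ i ∈ s, w i ≠ 0) :
    multisetSeries R w s * ∏ i ∈ s, (1 - X ^ w i) = 1 := by
  classical
  induction s using Finset.induction_on with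
  | empty => rw [coe_empty, multisetSeries_empty, prod_empty, mul_one]
  | insert a s ha ih =>
    rw [prod_insert ha, ← mul_assoc, coe_insert, multisetSeries_insert_mul (mod_cast ha)
      s.finite_toSet (mod_cast hw)]
    exact ih fun i hi => hw i (mem_insert_of_mem hi)

open Filter Topology PowerSeries.WithPiTopology in
lemma tendsto_multisetSeries [TopologicalSpace R] (s : Set ι) :
    Tendsto (fun N => multisetSeries R w {i ∈ s | w i ≤ N}) atTop (𝓝 (multisetSeries R w s)) := by
  rw [tendsto_iff_coeff_tendsto]
  intro n
  refine tendsto_atTop_of_eventually_const (i₀ := n) fun N hN => ?_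
  rw [coeff_multisetSeries, coeff_multisetSeries, ← weightedMultisets_eq_of_le s hN]

end WeightedMultisets

section EulerProducts

open Filter Topology PowerSeries.WithPiTopology

variable {R : Type*} [CommRing R] [TopologicalSpace R]

lemma hasProd_expand {ι : Type*} {d : ℕ} (hd : d ≠ 0) {f : ι → R⟦X⟧} {g : R⟦X⟧}
    (h : HasProd f g) : HasProd (fun i => expand d hd (f i)) (expand d hd g) := by
  rw [HasProd, tendsto_iff_coeff_tendsto] at h ⊢
  intro n
  simp only [← map_prod, coeff_expand]
  split_ifs with hn
  · exact h (n / d)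
  · exact tendsto_const_nhds

/-- The `i`-th factor, for `i ≥ 0`, of the product of `1 - X ^ j` over the positive integers `j`
satisfying `p`; it belongs to `j = i + 1`. -/
noncomputable def eulerFactor (R : Type*) [CommRing R] (p : ℕ → Prop) [DecidablePred p] (i : ℕ) :
    R⟦X⟧ :=
  if p (i + 1) then 1 - X ^ (i + 1) else 1

lemma hasProd_eulerFactor_dvd {d : ℕ} (hd : d ≠ 0) :
    HasProd (eulerFactor R (d ∣ ·)) (expand d hd (pentagonalSeries R)) := by
  have hpos (i : ℕ) : d * (i + 1) - 1 + 1 = d * (i + 1) :=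
    Nat.sub_add_cancel (Nat.mul_pos (Nat.pos_of_ne_zero hd) i.succ_pos)
  have hinj : Function.Injective fun i => d * (i + 1) - 1 := fun i j hij => by
    simpa [hd] using (hpos i).symm.trans ((congrArg (· + 1) hij).trans (hpos j))
  rw [← hinj.hasProd_iff]
  · convert hasProd_expand hd (hasProd_one_sub_X_pow R) using 1
    funext i
    simp [eulerFactor, hpos, pow_mul]
  · intro i hi
    refine if_neg ?_
    rintro ⟨_ | k, hk⟩
    · simp at hk
    · exact hi ⟨k, by simp only; lia⟩

end EulerProducts

section ColoredRegular

open Filter Topology PowerSeries.WithPiTopology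

/-- The coloured parts allowed in the partitions counted by `coloredRegular k l m`. -/
def coloredParts (k l m : ℕ) : Set (ℕ × ℕ) := {x | ¬ l ∣ x.1 ∧ ¬ m ∣ x.1 ∧ x.2 < k}

lemma eulerFactor_dvd_one_mul (R : Type*) [CommRing R] {l m : ℕ} (h : l.Coprime m) (i : ℕ) :
    eulerFactor R (1 ∣ ·) i * eulerFactor R (l * m ∣ ·) i =
      eulerFactor R (fun j => ¬ l ∣ j ∧ ¬ m ∣ j) i *
        (eulerFactor R (l ∣ ·) i * eulerFactor R (m ∣ ·) i) := by
  have hmul : l * m ∣ i + 1 ↔ l ∣ i + 1 ∧ m ∣ i + 1 :=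
    ⟨fun hd => ⟨dvd_of_mul_right_dvd hd, dvd_of_mul_left_dvd hd⟩,
      fun hd => h.mul_dvd_of_dvd_of_dvd hd.1 hd.2⟩
  by_cases hl : l ∣ i + 1 <;> by_cases hm : m ∣ i + 1 <;> simp [eulerFactor, hmul, hl, hm]

lemma multisetSeries_coloredParts_le_mul_prod_pow (R : Type*) [CommRing R] (k l m N : ℕ) :
    multisetSeries R Prod.fst {x ∈ coloredParts k l m | x.1 ≤ N} *
      (∏ i ∈ range N, eulerFactor R (fun j => ¬ l ∣ j ∧ ¬ m ∣ j) i) ^ k = 1 := by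
  have hparts : {x ∈ coloredParts k l m | x.1 ≤ N} =
      ↑({j ∈ range (N + 1) | ¬ l ∣ j ∧ ¬ m ∣ j} ×ˢ range k) := by
    ext ⟨j, c⟩
    simp [coloredParts]
    lia
  have hprod : (∏ i ∈ range N, eulerFactor R (fun j => ¬ l ∣ j ∧ ¬ m ∣ j) i) ^ k =
      ∏ x ∈ {j ∈ range (N + 1) | ¬ l ∣ j ∧ ¬ m ∣ j} ×ˢ range k, ((1 : R⟦X⟧) - X ^ x.1) := by
    rw [prod_product]
    simp [prod_pow, prod_filter, prod_range_succ', eulerFactor]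
  rw [hparts, hprod]
  refine multisetSeries_mul_prod_one_sub_X_pow _ fun x hx => ?_
  rintro h
  simp [h] at hx

theorem multisetSeries_coloredParts_mul_pow {k l m : ℕ} (hl : l ≠ 0) (hm : m ≠ 0)
    (h : l.Coprime m) :
    multisetSeries ℤ Prod.fst (coloredParts k l m) *
        (pentagonalSeries ℤ * expand (l * m) (mul_ne_zero hl hm) (pentagonalSeries ℤ)) ^ k =
      (expand l hl (pentagonalSeries ℤ) * expand m hm (pentagonalSeries ℤ)) ^ k := by
  have hlim {d : ℕ} (hd : d ≠ 0) := (hasProd_eulerFactor_dvd (R := ℤ) hd).tendsto_prod_nat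
  have hleft := (tendsto_multisetSeries (R := ℤ) (w := Prod.fst) (coloredParts k l m)).mul
    (((hlim one_ne_zero).mul (hlim (mul_ne_zero hl hm))).pow k)
  have hright := ((hlim hl).mul (hlim hm)).pow k
  rw [expand_one_apply] at hleft
  refine tendsto_nhds_unique (hleft.congr fun N => ?_) hright
  have hprod : (∏ i ∈ range N, eulerFactor ℤ (1 ∣ ·) i) * ∏ i ∈ range N, eulerFactor ℤ (l * m ∣ ·) i
      = (∏ i ∈ range N, eulerFactor ℤ (fun j => ¬ l ∣ j ∧ ¬ m ∣ j) i) *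
        ((∏ i ∈ range N, eulerFactor ℤ (l ∣ ·) i) * ∏ i ∈ range N, eulerFactor ℤ (m ∣ ·) i) := by
    simp only [← prod_mul_distrib, eulerFactor_dvd_one_mul ℤ h]
  rw [hprod, mul_pow, ← mul_assoc, multisetSeries_coloredParts_le_mul_prod_pow, one_mul]

end ColoredRegular

lemma coeff_multisetSeries_coloredParts {R : Type*} [CommRing R] (k l m n : ℕ) :
    coeff n (multisetSeries R Prod.fst (coloredParts k l m)) = coloredRegular k l m n :=
  coeff_multisetSeries _ _

section Divisibility

variable {R S : Type*} [CommSemiring R] [CommSemiring S]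

lemma map_derivative (σ : R →+* S) (f : R⟦X⟧) :
    PowerSeries.map σ (d⁄dX R f) = d⁄dX S (PowerSeries.map σ f) := by
  ext n
  simp [coeff_derivative]

lemma succ_mul_coeff_succ_pow (f : R⟦X⟧) (k n : ℕ) :
    (n + 1) * coeff (n + 1) (f ^ k) = k * coeff n (f ^ (k - 1) * d⁄dX R f) := by
  rw [mul_comm, ← coeff_derivative, derivative_pow, mul_assoc, ← map_natCast (C (R := R)),
    coeff_C_mul]

lemma exists_eq_pow_of_mul_pow_eq_pow {M : Type*} [CommMonoid M] {a b c : M} {k : ℕ}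
    (ha : IsUnit a) (h : c * a ^ k = b ^ k) : ∃ g, c = g ^ k ∧ g * a = b := by
  obtain ⟨a', ha'⟩ := ha.exists_right_inv
  refine ⟨b * a', ?_, by rw [mul_assoc, mul_comm a', ha', mul_one]⟩
  rw [mul_pow, ← h, mul_assoc, ← mul_pow, ha', one_pow, mul_one]

local notation "P" => pentagonalSeries ℤ

theorem exists_multisetSeries_coloredParts_eq_pow (k : ℕ) {l m : ℕ} (hl : l ≠ 0) (hm : m ≠ 0)
    (h : l.Coprime m) :
    ∃ G : ℤ⟦X⟧, multisetSeries ℤ Prod.fst (coloredParts k l m) = G ^ k ∧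
      G * (P * expand (l * m) (mul_ne_zero hl hm) P) = expand l hl P * expand m hm P :=
  exists_eq_pow_of_mul_pow_eq_pow
    (isUnit_pentagonalSeries.mul (isUnit_pentagonalSeries.map (expand _ _)))
    (multisetSeries_coloredParts_mul_pow hl hm h)

lemma map_zmod_two_mul_expand_three {G : ℤ⟦X⟧}
    (hG : G * (P * expand (3 * 2) (by decide) P) =
      expand 3 (by decide) P * expand 2 (by decide) P) :
    PowerSeries.map (Int.castRingHom (ZMod 2)) G *
      expand 3 three_ne_zero (pentagonalSeries (ZMod 2)) = pentagonalSeries (ZMod 2) := by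
  have hmod := congrArg (PowerSeries.map (Int.castRingHom (ZMod 2))) hG
  have hsix : expand (3 * 2) (by decide) (pentagonalSeries (ZMod 2)) =
      expand 3 three_ne_zero (pentagonalSeries (ZMod 2)) ^ 2 := by
    rw [sq_eq_expand, ← expand_mul]
  simp only [map_mul, map_expand, map_pentagonalSeries, hsix, ← sq_eq_expand] at hmod
  refine (isUnit_pentagonalSeries.mul
    (isUnit_pentagonalSeries.map (expand 3 three_ne_zero))).mul_left_cancel ?_
  linear_combination hmod

theorem coloredRegular_four_mul_add_one_modEq_zero {m : ℕ} (hm : 2 ≤ m % 4) :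
    coloredRegular 4 3 2 (4 * m + 1) ≡ 0 [MOD 8] := by
  obtain ⟨G, hpow, hG⟩ :=
    exists_multisetSeries_coloredParts_eq_pow 4 three_ne_zero two_ne_zero (by decide)
  obtain ⟨c, hc⟩ : (2 : ℤ) ∣ coeff (4 * m) (G ^ 3 * d⁄dX ℤ G) := by
    rw [← Nat.cast_two, ← ZMod.intCast_zmod_eq_zero_iff_dvd,
      ← eq_intCast (Int.castRingHom (ZMod 2)), ← coeff_map, map_mul, map_pow, map_derivative]
    exact coeff_pow_three_mul_derivative (map_zmod_two_mul_expand_three hG) hm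
  have hdvd : 8 ∣ (4 * m + 1) * coloredRegular 4 3 2 (4 * m + 1) := by
    have h := succ_mul_coeff_succ_pow G 4 (4 * m)
    rw [← hpow, coeff_multisetSeries_coloredParts, hc] at h
    zify
    exact ⟨c, by push_cast at h; linear_combination h⟩
  have hcoprime : Nat.Coprime (2 ^ 3) (4 * m + 1) :=
    Nat.Coprime.pow_left 3 (Nat.coprime_two_left.2 ⟨2 * m, by ring⟩)
  exact Nat.modEq_zero_iff_dvd.2 (hcoprime.dvd_of_dvd_mul_left hdvd)

end Divisibility

theorem stmt_10 (n : ℕ) :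
    coloredRegular 4 3 2 (16 * n + 9) ≡ 0 [MOD 8] ∧
    coloredRegular 4 3 2 (16 * n + 13) ≡ 0 [MOD 8] := by
  have h9 := coloredRegular_four_mul_add_one_modEq_zero (m := 4 * n + 2) (by lia)
  have h13 := coloredRegular_four_mul_add_one_modEq_zero (m := 4 * n + 3) (by lia)
  rw [show 4 * (4 * n + 2) + 1 = 16 * n + 9 by ring] at h9
  rw [show 4 * (4 * n + 3) + 1 = 16 * n + 13 by ring] at h13
  exact ⟨h9, h13⟩
end

section
/- Let n be a nonnegative integer that cannot be written as the sum of a generalized pentagonal number and six times a generalized pentagonal number (i.e. n ≠ k(3k−1)/2 + 3l(3l−1) for all integers k, l). Then b^4_{3,2}(16n+5) ≡ 0 (mod 8). -/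
/-!
Write `f_k = ∏ n ≥ 1, (1 - q ^ (k * n))`, `e = f_1 / f_3`, and let `D(q)` be the sum of
`q ^ (d * m)` over `d, m ≥ 1` with `m` odd. Modulo `8` we have
`(1 - x) ^ 4 = (1 - x ^ 2) ^ 2 * (1 + 4 * x / (1 - x ^ 2))`, hence
`f_1 ^ 4 = f_2 ^ 2 * (1 + 4 * D)`, so that the generating function
`(f_2 * f_3) ^ 4 / (f_1 * f_6) ^ 4` becomes `e(q ^ 2) ^ 2 * (1 + 4 * (D(q) + D(q ^ 3)))`. Odd
exponents only occur in the term with the factor `4`, which has to be known modulo `2`.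

Modulo `2`, Jacobi's identity says that `f_1 ^ 3` is the generating function of the triangular
numbers, and cancelling `d` against `m` gives `D(q) = q * f_8 ^ 3 + D(q ^ 2)`. This makes the
coefficient in degree `16 * n + 5` equal to that of `e * f_2 ^ 3` in degree `4 * n + 1`. The
identity `f_1 ^ 3 * f_3 ^ 3 = f_4 ^ 3 + q * f_12 ^ 3` dissects `e * f_2 ^ 3` in turn and leaves the
coefficient of `e * f_3 ^ 3 = f_1 * f_6` in degree `n`, which Euler's pentagonal number theorem
computes.
-/

namespace ColoredRegular

open PowerSeries Filter Function
open scoped PowerSeries.WithPiTopology Topology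

section WeightSeries

variable {ι κ : Type*} (R : Type*)

/-- The generating function `∑ i, X ^ f i` of a weight `f`, encoded by the number of indices of each
weight. It is meaningful when every weight is attained finitely often, i.e. when `f` tends to
infinity along `cofinite`. -/
noncomputable def weightSeries [Semiring R] (f : ι → ℕ) : R⟦X⟧ :=
  PowerSeries.mk fun n => (Nat.card {i // f i = n} : R)

variable {f : ι → ℕ} {g : κ → ℕ}

theorem finite_fiber_of_tendsto (hf : Tendsto f cofinite atTop) (n : ℕ) : {i | f i = n}.Finite := by
  refine (hf.eventually_gt_atTop n).subset fun i hi => ?_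
  simpa using (Set.mem_ofPred.1 hi).le

theorem tendsto_atTop_of_finite_le (hf : ∀ n, {i | f i ≤ n}.Finite) : Tendsto f cofinite atTop :=
  tendsto_atTop.2 fun n => (hf n).subset fun i hi => by
    simpa using le_of_lt (not_le.1 ((Set.mem_compl_iff _ _).1 hi))

theorem tendsto_add_prod (hf : Tendsto f cofinite atTop) (hg : Tendsto g cofinite atTop) :
    Tendsto (fun p : ι × κ => f p.1 + g p.2) cofinite atTop := by
  rw [← coprod_cofinite, Filter.coprod, tendsto_sup]
  exact ⟨tendsto_atTop_mono (fun _ => Nat.le_add_right _ _) (hf.comp tendsto_comap),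
    tendsto_atTop_mono (fun _ => Nat.le_add_left _ _) (hg.comp tendsto_comap)⟩

theorem tendsto_const_mul {k : ℕ} [NeZero k] (hf : Tendsto f cofinite atTop) :
    Tendsto (fun i => k * f i) cofinite atTop :=
  hf.const_mul_atTop' (NeZero.pos k)

theorem tendsto_of_injective (hf : Injective f) : Tendsto f cofinite atTop :=
  Nat.cofinite_eq_atTop ▸ hf.tendsto_cofinite

theorem coeff_weightSeries [Semiring R] (f : ι → ℕ) (n : ℕ) :
    coeff n (weightSeries R f) = Nat.card {i // f i = n} :=
  coeff_mk _ _

theorem map_weightSeries [Semiring R] {S : Type*} [Semiring S] (φ : R →+* S) (f : ι → ℕ) :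
    PowerSeries.map φ (weightSeries R f) = weightSeries S f := by
  ext n
  simp [coeff_weightSeries]

theorem weightSeries_comp_equiv [Semiring R] (f : ι → ℕ) (e : κ ≃ ι) :
    weightSeries R (f ∘ e) = weightSeries R f := by
  ext n
  rw [coeff_weightSeries, coeff_weightSeries,
    Nat.card_congr (e.subtypeEquiv (p := fun j => (f ∘ e) j = n) (q := fun i => f i = n)
      fun _ => Iff.rfl)]

theorem hasSum_weightSeries [Semiring R] [TopologicalSpace R] (hf : Tendsto f cofinite atTop) :
    HasSum (fun i => (X : R⟦X⟧) ^ f i) (weightSeries R f) := by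
  classical
  refine (WithPiTopology.hasSum_iff_hasSum_coeff R).2 fun n => ?_
  have hcard : coeff n (weightSeries R f) =
      ∑ i ∈ (finite_fiber_of_tendsto hf n).toFinset, coeff n ((X : R⟦X⟧) ^ f i) := by
    rw [coeff_weightSeries, Finset.sum_congr rfl (g := fun _ => (1 : R)), Finset.sum_const,
      nsmul_one, ← Set.ncard_eq_toFinset_card _ (finite_fiber_of_tendsto hf n),
      ← Nat.card_coe_set_eq]
    · rfl
    · simp +contextual [coeff_X_pow, eq_comm]
  exact hcard ▸ hasSum_sum_of_ne_finset_zero (by simp +contextual [coeff_X_pow, eq_comm])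

section Semiring
variable [Semiring R]

theorem weightSeries_eq_add {α β : Type*} (hf : Tendsto f cofinite atTop) {u : α → ι} {v : β → ι}
    (huv : Bijective (Sum.elim u v)) :
    weightSeries R f = weightSeries R (f ∘ u) + weightSeries R (f ∘ v) := by
  let _ : TopologicalSpace R := ⊥
  have _ : DiscreteTopology R := ⟨rfl⟩
  have hu : Injective u := fun a b h => Sum.inl_injective (huv.1 (by simpa using h))
  have hv : Injective v := fun a b h => Sum.inr_injective (huv.1 (by simpa using h))
  have hsum := HasSum.sum (f := (fun i => (X : R⟦X⟧) ^ f i) ∘ Sum.elim u v)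
    (hasSum_weightSeries R (hf.comp hu.tendsto_cofinite))
    (hasSum_weightSeries R (hf.comp hv.tendsto_cofinite))
  exact (hasSum_weightSeries R hf).unique ((Equiv.ofBijective _ huv).hasSum_iff.1 hsum)

theorem weightSeries_mul_weightSeries {R : Type*} [Ring R] (hf : Tendsto f cofinite atTop)
    (hg : Tendsto g cofinite atTop) :
    weightSeries R f * weightSeries R g = weightSeries R fun p : ι × κ => f p.1 + g p.2 := by
  let _ : TopologicalSpace R := ⊥
  have _ : DiscreteTopology R := ⟨rfl⟩
  have hfg := hasSum_weightSeries R (tendsto_add_prod hf hg)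
  simp only [pow_add] at hfg
  exact ((hasSum_weightSeries R hf).mul (hasSum_weightSeries R hg) hfg.summable).unique hfg

theorem expand_weightSeries {R : Type*} [CommRing R] (k : ℕ) (hk : k ≠ 0) (f : ι → ℕ) :
    expand k hk (weightSeries R f) = weightSeries R fun i => k * f i := by
  ext n
  rw [coeff_expand]
  split_ifs with h
  · obtain ⟨m, rfl⟩ := h
    simp [coeff_weightSeries, Nat.mul_div_cancel_left _ hk.bot_lt, hk]
  · have : IsEmpty {i // k * f i = n} := ⟨fun i => h ⟨_, i.2.symm⟩⟩
    simp [coeff_weightSeries]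

theorem X_pow_mul_weightSeries (m : ℕ) (f : ι → ℕ) :
    X ^ m * weightSeries R f = weightSeries R fun i => f i + m := by
  ext n
  simp only [coeff_X_pow_mul', coeff_weightSeries]
  split_ifs with h
  · obtain ⟨n, rfl⟩ := Nat.exists_eq_add_of_le' h
    simp
  · have : IsEmpty {i // f i + m = n} := ⟨fun i => h (i.2 ▸ Nat.le_add_left _ _)⟩
    rw [Nat.card_of_isEmpty, Nat.cast_zero]

end Semiring

/-- The pairs `{i, σ i}` cancel modulo two, so that only fixed points survive. -/
theorem weightSeries_eq_of_involutive {σ : ι → ι} (hσ : Involutive σ) (hfσ : ∀ i, f (σ i) = f i)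
    (hf : Tendsto f cofinite atTop) {u : κ → ι} (hu : Injective u)
    (hrange : ∀ i, σ i = i ↔ i ∈ Set.range u) :
    weightSeries (ZMod 2) f = weightSeries (ZMod 2) (f ∘ u) := by
  classical
  ext n
  have : Fintype {i // f i = n} := (finite_fiber_of_tendsto hf n).fintype
  let τ : Function.End {i // f i = n} := fun i => ⟨σ i, (hfσ i).trans i.2⟩
  have hτ : τ ^ 2 ^ 1 = 1 := by
    rw [pow_one, pow_two]
    exact funext fun i => Subtype.ext (hσ i)
  have hfixed (i) : i ∈ fixedPoints τ ↔ (i : ι) ∈ Set.range u :=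
    Subtype.ext_iff.trans (hrange i)
  let e : {j // (f ∘ u) j = n} → fixedPoints τ :=
    fun j => ⟨⟨u j, j.2⟩, (hfixed _).2 ⟨j, rfl⟩⟩
  have he : Bijective e := by
    refine ⟨fun i j h => Subtype.ext (hu (by simpa [e] using h)), ?_⟩
    rintro ⟨⟨i, hi⟩, hfix⟩
    obtain ⟨j, rfl⟩ := (hfixed _).1 hfix
    exact ⟨⟨j, hi⟩, rfl⟩
  rw [coeff_weightSeries, coeff_weightSeries, ZMod.natCast_eq_natCast_iff,
    Nat.card_congr (Equiv.ofBijective e he), Nat.card_eq_fintype_card, Nat.card_eq_fintype_card]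
  exact Equiv.Perm.card_fixedPoints_modEq hτ

end WeightSeries

section Multiset

variable {α : Type*} {w : α → ℕ}

theorem tendsto_multiset_sum_map (hpos : ∀ a, 0 < w a) (hw : Tendsto w cofinite atTop) :
    Tendsto (fun M : Multiset α => (M.map w).sum) cofinite atTop := by
  classical
  refine tendsto_atTop_of_finite_le fun n => ?_
  have hfin : {a | w a ≤ n}.Finite := by
    simpa using hw.eventually_gt_atTop n
  refine (Set.finite_Iic (n • hfin.toFinset.val)).subset fun M (hM : (M.map w).sum ≤ n) => ?_
  have hcard : M.card ≤ n := by
    refine le_trans ?_ hM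
    simpa using Multiset.card_nsmul_le_sum (s := M.map w) (a := 1)
      (by simpa [Nat.one_le_iff_ne_zero] using fun a _ => (hpos a).ne')
  refine Set.mem_Iic.2 (Multiset.le_iff_count.2 fun a => ?_)
  by_cases ha : a ∈ M
  · have hle : w a ≤ n :=
      (Multiset.single_le_sum (by simp) _ (Multiset.mem_map_of_mem w ha)).trans hM
    rw [Multiset.count_nsmul, Multiset.count_eq_one_of_mem hfin.toFinset.nodup (by simpa using hle),
      mul_one]
    exact (Multiset.count_le_card a M).trans hcard
  · simp [Multiset.count_eq_zero_of_notMem ha]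

/-- The weight of a multiset with elements in `S`, so that `weightSeries R (multisetWeight w S)` is
the generating function of these multisets. -/
def multisetWeight (w : α → ℕ) (S : Finset α) (M : {M : Multiset α // ∀ a ∈ M, a ∈ S}) : ℕ :=
  (M.1.map w).sum

theorem weightSeries_multisetWeight_insert [DecidableEq α] {R : Type*} [Semiring R]
    (hpos : ∀ a, 0 < w a) (hw : Tendsto w cofinite atTop) {a : α} {S : Finset α} (ha : a ∉ S) :
    weightSeries R (multisetWeight w (insert a S)) =
      weightSeries R (multisetWeight w S) +
        X ^ w a * weightSeries R (multisetWeight w (insert a S)) := by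
  let u : {M : Multiset α // ∀ b ∈ M, b ∈ S} → {M : Multiset α // ∀ b ∈ M, b ∈ insert a S} :=
    fun M => ⟨M.1, fun b hb => Finset.mem_insert_of_mem (M.2 b hb)⟩
  let v (M : {M : Multiset α // ∀ b ∈ M, b ∈ insert a S}) :
      {M : Multiset α // ∀ b ∈ M, b ∈ insert a S} :=
    ⟨a ::ₘ M.1, Multiset.forall_mem_cons.2 ⟨Finset.mem_insert_self a S, M.2⟩⟩
  have huv : Bijective (Sum.elim u v) := by
    refine ⟨Injective.sumElim (fun M N h => Subtype.ext (congrArg Subtype.val h :))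
      (fun M N h => Subtype.ext ((Multiset.cons_inj_right a).1 (congrArg Subtype.val h)))
      fun M N h => ha (M.2 a ?_), fun M => ?_⟩
    · exact (congrArg Subtype.val h : M.1 = a ::ₘ N.1) ▸ Multiset.mem_cons_self a N.1
    · by_cases haM : a ∈ M.1
      · refine ⟨.inr ⟨M.1.erase a, fun b hb => M.2 b (Multiset.mem_of_mem_erase hb)⟩, ?_⟩
        exact Subtype.ext (Multiset.cons_erase haM)
      · refine ⟨.inl ⟨M.1, fun b hb => ?_⟩, rfl⟩
        exact Finset.mem_of_mem_insert_of_ne (M.2 b hb) fun h => haM (h ▸ hb)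
  have hweight : Tendsto (multisetWeight w (insert a S)) cofinite atTop :=
    (tendsto_multiset_sum_map hpos hw).comp Subtype.val_injective.tendsto_cofinite
  have hv : multisetWeight w (insert a S) ∘ v = fun M => multisetWeight w (insert a S) M + w a := by
    ext M
    simp [multisetWeight, v, add_comm]
  have hu : multisetWeight w (insert a S) ∘ u = multisetWeight w S := rfl
  rw [X_pow_mul_weightSeries, ← hv, ← hu, ← weightSeries_eq_add R hweight huv]

theorem weightSeries_multisetWeight_mul_prod {R : Type*} [CommRing R] (hpos : ∀ a, 0 < w a)
    (hw : Tendsto w cofinite atTop) (S : Finset α) :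
    weightSeries R (multisetWeight w S) * ∏ a ∈ S, (1 - X ^ w a) = 1 := by
  classical
  induction S using Finset.induction_on with
  | empty =>
    let _ : Unique {M : Multiset α // ∀ a ∈ M, a ∈ (∅ : Finset α)} :=
      ⟨⟨0, by simp⟩, fun M => Subtype.ext (Multiset.eq_zero_of_forall_notMem (by simpa using M.2))⟩
    have hempty (M) : multisetWeight w ∅ M = 0 := by
      rw [Unique.eq_default M]
      rfl
    ext n
    rcases eq_or_ne n 0 with rfl | hn
    · simp [coeff_weightSeries, hempty]
    · simp [coeff_weightSeries, coeff_one, hempty, hn, hn.symm]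
  | insert a S ha ih =>
    rw [Finset.prod_insert ha]
    linear_combination ih +
      (∏ a ∈ S, (1 - X ^ w a)) * weightSeries_multisetWeight_insert (R := R) hpos hw ha

theorem tendsto_weightSeries_multisetWeight (R : Type*) [Semiring R] [TopologicalSpace R]
    (hw : Tendsto w cofinite atTop) :
    Tendsto (fun S => weightSeries R (multisetWeight w S)) atTop
      (𝓝 (weightSeries R fun M : Multiset α => (M.map w).sum)) := by
  refine (WithPiTopology.tendsto_iff_coeff_tendsto R _ _ _).2 fun n => ?_
  have hfin : {a | w a ≤ n}.Finite := by
    simpa using hw.eventually_gt_atTop n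
  refine tendsto_nhds_of_eventually_eq ?_
  filter_upwards [eventually_ge_atTop hfin.toFinset] with S hS
  have hmem (M : Multiset α) (hM : (M.map w).sum = n) : ∀ a ∈ M, a ∈ S := fun a ha =>
    hS (by simpa [hM] using Multiset.single_le_sum (by simp) _ (Multiset.mem_map_of_mem w ha))
  rw [coeff_weightSeries, coeff_weightSeries]
  exact congrArg _ (Nat.card_congr (Equiv.subtypeSubtypeEquivSubtype (hmem _)))

theorem weightSeries_multiset_mul_eq_one {R : Type*} [CommRing R] [TopologicalSpace R]
    [IsTopologicalRing R] [T2Space R] (hpos : ∀ a, 0 < w a) (hw : Tendsto w cofinite atTop)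
    {P : R⟦X⟧} (hP : HasProd (fun a => 1 - X ^ w a) P) :
    weightSeries R (fun M : Multiset α => (M.map w).sum) * P = 1 := by
  refine tendsto_nhds_unique ((tendsto_weightSeries_multisetWeight R hw).mul hP) ?_
  simp_rw [weightSeries_multisetWeight_mul_prod hpos hw]
  exact tendsto_const_nhds

end Multiset

/-! ### Euler products modulo two -/

/-- The triangular numbers, each enumerated exactly once as `a * (2 * a + 1)` with `a : ℤ`:
`a ≥ 0` gives those with even index `2 * a`, `a < 0` those with odd index `-2 * a - 1`. -/
def triangular (a : ℤ) : ℕ := (a * (2 * a + 1)).toNat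

theorem natCast_triangular (a : ℤ) : (triangular a : ℤ) = a * (2 * a + 1) := by
  refine Int.toNat_of_nonneg ?_
  rcases le_or_gt 0 a with ha | ha <;> nlinarith

theorem triangular_injective : Injective triangular := by
  intro a b h
  have hab : (a - b) * (2 * (a + b) + 1) = 0 := by
    linear_combination natCast_triangular b - natCast_triangular a + congrArg (Nat.cast : ℕ → ℤ) h
  rcases mul_eq_zero.1 hab with h | h <;> lia

theorem tendsto_pentagonal : Tendsto pentagonal cofinite atTop :=
  tendsto_of_injective pentagonal_injective

theorem tendsto_triangular : Tendsto triangular cofinite atTop :=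
  tendsto_of_injective triangular_injective

/-- The Euler product `f_k = ∏ n ≥ 1, (1 - q ^ (k * n))`, given by its pentagonal number series;
see `hasProd_eulerSeries` for the product. -/
noncomputable def eulerSeries (R : Type*) [CommRing R] (k : ℕ) [NeZero k] : R⟦X⟧ :=
  expand k (NeZero.ne k) (pentagonalSeries R)

theorem expand_eulerSeries {R : Type*} [CommRing R] (j k : ℕ) [NeZero j] [NeZero k] :
    expand j (NeZero.ne j) (eulerSeries R k) = eulerSeries R (j * k) := by
  rw [eulerSeries, eulerSeries, ← expand_mul]

instance charP_powerSeries (R : Type*) [Ring R] (p : ℕ) [CharP R p] : CharP R⟦X⟧ p :=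
  charP_of_injective_ringHom (C_injective (R := R)) p

theorem expand_two_eq_sq (φ : (ZMod 2)⟦X⟧) : expand 2 two_ne_zero φ = φ ^ 2 := by
  have h := MvPowerSeries.map_frobenius_expand (σ := Unit) (R := ZMod 2) 2 two_ne_zero (f := φ)
  rwa [ZMod.frobenius_zmod, MvPowerSeries.map_id] at h

theorem eulerSeries_two_mul (k : ℕ) [NeZero k] :
    eulerSeries (ZMod 2) (2 * k) = eulerSeries (ZMod 2) k ^ 2 := by
  rw [← expand_eulerSeries, expand_two_eq_sq]

theorem pentagonalSeries_eq_weightSeries :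
    pentagonalSeries (ZMod 2) = weightSeries (ZMod 2) pentagonal := by
  refine (WithPiTopology.hasSum_pentagonalSeries (ZMod 2)).unique ?_
  convert hasSum_weightSeries (ZMod 2) tendsto_pentagonal using 2 with j
  rcases Int.units_eq_one_or j.negOnePow with h | h <;> simp [h, CharTwo.neg_eq]

theorem eulerSeries_eq_weightSeries (k : ℕ) [NeZero k] :
    eulerSeries (ZMod 2) k = weightSeries (ZMod 2) fun j => k * pentagonal j := by
  rw [eulerSeries, pentagonalSeries_eq_weightSeries, expand_weightSeries]

theorem weightSeries_eq_of_reflection {w : ℤ × ℤ → ℕ} (hw : Tendsto w cofinite atTop)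
    (hinv : ∀ k s, w (k - s, -s) = w (k, s)) :
    weightSeries (ZMod 2) w = weightSeries (ZMod 2) fun k => w (k, 0) :=
  weightSeries_eq_of_involutive (σ := fun p => (p.1 - p.2, -p.2)) (fun p => by simp)
    (fun p => hinv p.1 p.2) hw (Prod.mk_left_injective 0) fun p => by grind

/-- The bijection of `ℤ × ℤ` in whose coordinates the weight `pentagonal k + triangular a` becomes a
quadratic polynomial invariant under the reflection `(k, s) ↦ (k - s, -s)`. -/
def pentagonalTriangularShear : ℤ × ℤ ≃ ℤ × ℤ :=
  .prodShear (.refl ℤ) fun k =>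
    if Even k then .subRight (3 * (k / 2)) else .subLeft (3 * (k / 2) + 1)

theorem natCast_pentagonal_add_triangular_shear (k s : ℤ) :
    ((pentagonal (pentagonalTriangularShear (k, s)).1 +
      triangular (pentagonalTriangularShear (k, s)).2 : ℕ) : ℤ) =
      6 * k ^ 2 - 2 * k + 2 * s ^ 2 - 6 * s * k + s := by
  have hpent := two_mul_natCast_pentagonal k
  rcases Int.even_or_odd' k with ⟨c, rfl | rfl⟩
  · have hshear : pentagonalTriangularShear (2 * c, s) = (2 * c, s - 3 * c) := by
      simp [pentagonalTriangularShear]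
    rw [hshear, Nat.cast_add, natCast_triangular]
    linarith
  · have hdiv : (2 * c + 1) / 2 = c := by lia
    have hshear : pentagonalTriangularShear (2 * c + 1, s) = (2 * c + 1, 3 * c + 1 - s) := by
      simp [pentagonalTriangularShear, hdiv, ← Int.not_even_iff_odd]
    rw [hshear, Nat.cast_add, natCast_triangular]
    linarith

theorem eulerSeries_one (R : Type*) [CommRing R] : eulerSeries R 1 = pentagonalSeries R := by
  rw [eulerSeries, expand_one, AlgHom.id_apply]

theorem pentagonalSeries_mul_weightSeries_triangular :
    pentagonalSeries (ZMod 2) * weightSeries (ZMod 2) triangular = eulerSeries (ZMod 2) 4 := by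
  let w : ℤ × ℤ → ℕ := fun p => pentagonal p.1 + triangular p.2
  have hw : Tendsto w cofinite atTop := tendsto_add_prod tendsto_pentagonal tendsto_triangular
  have hshear (k s : ℤ) : (w (pentagonalTriangularShear (k, s)) : ℤ) =
      6 * k ^ 2 - 2 * k + 2 * s ^ 2 - 6 * s * k + s :=
    natCast_pentagonal_add_triangular_shear k s
  rw [pentagonalSeries_eq_weightSeries,
    weightSeries_mul_weightSeries tendsto_pentagonal tendsto_triangular,
    ← weightSeries_comp_equiv _ _ pentagonalTriangularShear, weightSeries_eq_of_reflection
      (hw.comp pentagonalTriangularShear.injective.tendsto_cofinite), eulerSeries_eq_weightSeries]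
  · congr 1 with k
    zify [comp_apply]
    linear_combination hshear k 0 - 2 * two_mul_natCast_pentagonal k
  · intro k s
    zify [comp_apply]
    linear_combination hshear (k - s) (-s) - hshear k s

theorem isUnit_eulerSeries (R : Type*) [CommRing R] (k : ℕ) [NeZero k] :
    IsUnit (eulerSeries R k) := by
  have hcoeff : constantCoeff (pentagonalSeries R) = 1 := by
    simpa [pentagonal] using coeff_pentagonalSeries_pentagonal R 0
  rw [isUnit_iff_constantCoeff, eulerSeries, constantCoeff_expand, hcoeff]
  exact isUnit_one

theorem weightSeries_triangular :
    weightSeries (ZMod 2) triangular = eulerSeries (ZMod 2) 1 ^ 3 := by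
  refine (isUnit_eulerSeries (ZMod 2) 1).mul_left_cancel ?_
  rw [eulerSeries_one, pentagonalSeries_mul_weightSeries_triangular, ← eulerSeries_one,
    eulerSeries_two_mul 2, eulerSeries_two_mul 1]
  ring

theorem eulerSeries_pow_three (k : ℕ) [NeZero k] :
    eulerSeries (ZMod 2) k ^ 3 = weightSeries (ZMod 2) fun a => k * triangular a := by
  rw [eulerSeries, ← map_pow, ← eulerSeries_one, ← weightSeries_triangular, expand_weightSeries]

theorem weightSeries_triangular_add_three_mul_triangular :
    weightSeries (ZMod 2) (fun p : ℤ × ℤ => 1 * triangular p.1 + 3 * triangular p.2) =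
      weightSeries (ZMod 2) (fun a => 4 * triangular a) +
        weightSeries (ZMod 2) (fun a => 12 * triangular a + 1) := by
  let w : ℤ × ℤ → ℕ := fun p => 1 * triangular p.1 + 3 * triangular p.2
  let u : ℤ × ℤ → ℤ × ℤ := fun p => (p.1 - 2 * p.2, p.1)
  let v : ℤ × ℤ → ℤ × ℤ := fun p => (2 * p.2 - 3 * p.1 - 1, p.1)
  have hw : Tendsto w cofinite atTop :=
    tendsto_add_prod (tendsto_const_mul tendsto_triangular) (tendsto_const_mul tendsto_triangular)
  have huv : Bijective (Sum.elim u v) := by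
    refine ⟨by rintro (p | p) (q | q) h <;> grind, fun p => ?_⟩
    rcases Int.even_or_odd' (p.2 - p.1) with ⟨s, hs | hs⟩
    · exact ⟨.inl (p.2, s), Prod.ext (by grind) rfl⟩
    · exact ⟨.inr (p.2, 2 * p.2 - s), Prod.ext (by grind) rfl⟩
  have hu (b s : ℤ) : (w (u (b, s)) : ℤ) = 8 * b ^ 2 - 8 * b * s + 8 * s ^ 2 + 4 * b - 2 * s := by
    simp only [w, u, Nat.cast_add, Nat.cast_mul, natCast_triangular]
    push_cast
    ring
  have hv (b s : ℤ) : (w (v (b, s)) : ℤ) =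
      24 * b ^ 2 - 24 * b * s + 8 * s ^ 2 + 12 * b - 6 * s + 1 := by
    simp only [w, v, Nat.cast_add, Nat.cast_mul, natCast_triangular]
    push_cast
    ring
  rw [weightSeries_eq_add _ hw huv,
    weightSeries_eq_of_reflection (w := w ∘ u)
      (hw.comp (huv.1.comp Sum.inl_injective).tendsto_cofinite),
    weightSeries_eq_of_reflection (w := w ∘ v)
      (hw.comp (huv.1.comp Sum.inr_injective).tendsto_cofinite)]
  · congr 2 with b
    · zify [comp_apply]
      linear_combination hu b 0 - 4 * natCast_triangular b
    · zify [comp_apply]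
      linear_combination hv b 0 - 12 * natCast_triangular b
  · intro b s
    zify [comp_apply]
    linear_combination hv (b - s) (-s) - hv b s
  · intro b s
    zify [comp_apply]
    linear_combination hu (b - s) (-s) - hu b s

theorem eulerSeries_pow_three_mul_eulerSeries_three_pow_three :
    eulerSeries (ZMod 2) 1 ^ 3 * eulerSeries (ZMod 2) 3 ^ 3 =
      eulerSeries (ZMod 2) 4 ^ 3 + X * eulerSeries (ZMod 2) 12 ^ 3 := by
  simp only [eulerSeries_pow_three]
  rw [weightSeries_mul_weightSeries (tendsto_const_mul tendsto_triangular)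
    (tendsto_const_mul tendsto_triangular), weightSeries_triangular_add_three_mul_triangular,
    ← pow_one X, X_pow_mul_weightSeries]

/-! ### Odd divisors modulo two -/

/-- The weight `d * m` of the pair of positive integers `d = j + 1` and `m = 2 * k + 1`, with `m`
odd, indexed by `(j, k)`. -/
def oddDivisorWeight (p : ℕ × ℕ) : ℕ := (p.1 + 1) * (2 * p.2 + 1)

/-- The generating function of the number of odd divisors. -/
noncomputable def oddDivisorSeries (R : Type*) [Semiring R] : R⟦X⟧ :=
  weightSeries R oddDivisorWeight

theorem tendsto_oddDivisorWeight : Tendsto oddDivisorWeight cofinite atTop :=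
  tendsto_atTop_mono (fun p => by simp only [oddDivisorWeight, id]; nlinarith)
    (tendsto_add_prod (tendsto_of_injective injective_id) (tendsto_of_injective injective_id))

theorem sq_two_mul_intEquivNat_add_one (a : ℤ) :
    (2 * Equiv.intEquivNat a + 1) ^ 2 = 8 * triangular a + 1 := by
  zify
  rw [natCast_triangular]
  rcases a with m | m
  · have : Equiv.intEquivNat (Int.ofNat m) = 2 * m := rfl
    rw [this]
    push_cast [Int.ofNat_eq_natCast]
    ring
  · have : Equiv.intEquivNat (Int.negSucc m) = 2 * m + 1 := rfl
    rw [this]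
    push_cast [Int.negSucc_eq]
    ring

/-- Splitting off the even divisors `d` leaves the pairs of odd numbers, where exchanging the two
factors leaves only the odd squares `8 * triangular a + 1` modulo two. -/
theorem oddDivisorSeries_eq_expand_two :
    oddDivisorSeries (ZMod 2) = X * eulerSeries (ZMod 2) 8 ^ 3 +
      expand 2 two_ne_zero (oddDivisorSeries (ZMod 2)) := by
  let u : ℕ × ℕ → ℕ × ℕ := fun p => (2 * p.1, p.2)
  let v : ℕ × ℕ → ℕ × ℕ := fun p => (2 * p.1 + 1, p.2)
  have huv : Bijective (Sum.elim u v) := by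
    refine ⟨by rintro (p | p) (q | q) h <;> grind, fun p => ?_⟩
    rcases Nat.even_or_odd' p.1 with ⟨j, hj | hj⟩
    · exact ⟨.inl (j, p.2), Prod.ext hj.symm rfl⟩
    · exact ⟨.inr (j, p.2), Prod.ext hj.symm rfl⟩
  have hodd : weightSeries (ZMod 2) (oddDivisorWeight ∘ u) = X * eulerSeries (ZMod 2) 8 ^ 3 := by
    rw [weightSeries_eq_of_involutive (σ := Prod.swap) (f := oddDivisorWeight ∘ u)
        (u := fun a => (Equiv.intEquivNat a, Equiv.intEquivNat a)) Prod.swap_swap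
        (fun p => mul_comm _ _)
        (tendsto_oddDivisorWeight.comp (huv.1.comp Sum.inl_injective).tendsto_cofinite),
      eulerSeries_pow_three, ← pow_one X, X_pow_mul_weightSeries]
    · congr 1 with a
      rw [← sq_two_mul_intEquivNat_add_one, sq]
      rfl
    · exact fun a b h => Equiv.intEquivNat.injective (congrArg Prod.fst h)
    · rintro ⟨j, k⟩
      simp only [Prod.swap_prod_mk, Prod.mk.injEq, Set.mem_range]
      exact ⟨fun h => ⟨Equiv.intEquivNat.symm j, by simp [h.2]⟩, by grind⟩
  have heven : oddDivisorWeight ∘ v = fun p => 2 * oddDivisorWeight p := by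
    ext p
    simp only [oddDivisorWeight, v, comp_apply]
    ring
  rw [oddDivisorSeries, expand_weightSeries, ← heven, ← hodd,
    ← weightSeries_eq_add _ tendsto_oddDivisorWeight huv]

theorem coeff_X_pow_mul_expand {R : Type*} [CommRing R] {k r s : ℕ} (hk : k ≠ 0) (hr : r < k)
    (hs : s < k) (n : ℕ) (φ : R⟦X⟧) :
    coeff (k * n + s) (X ^ r * expand k hk φ) = if r = s then coeff n φ else 0 := by
  rw [coeff_X_pow_mul', coeff_expand]
  split_ifs with h₁ h₂ h₃ h₃ h₃
  · rw [h₃, Nat.add_sub_cancel, Nat.mul_div_cancel_left _ hk.bot_lt]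
  · have : k * n + s ≡ r [MOD k] := ((Nat.modEq_iff_dvd' h₁).2 h₂).symm
    rw [Nat.ModEq, Nat.mul_add_mod, Nat.mod_eq_of_lt hs, Nat.mod_eq_of_lt hr] at this
    exact absurd this.symm h₃
  · exact absurd (by simp [h₃]) h₂
  · rfl
  · lia
  · rfl

theorem expand_four_eq_pow_four (φ : (ZMod 2)⟦X⟧) : expand 4 four_ne_zero φ = φ ^ 4 := by
  have h := expand_mul 2 two_ne_zero 2 two_ne_zero φ
  rwa [expand_two_eq_sq, expand_two_eq_sq, ← pow_mul] at h

theorem eulerSeries_four_mul (k : ℕ) [NeZero k] :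
    eulerSeries (ZMod 2) (4 * k) = eulerSeries (ZMod 2) k ^ 4 := by
  rw [← expand_eulerSeries, expand_four_eq_pow_four]

theorem oddDivisorSeries_eq_expand_four :
    oddDivisorSeries (ZMod 2) =
      X * eulerSeries (ZMod 2) 8 ^ 3 + X ^ 2 * eulerSeries (ZMod 2) 16 ^ 3 +
        expand 4 four_ne_zero (oddDivisorSeries (ZMod 2)) := by
  have hexpand : expand 2 two_ne_zero (oddDivisorSeries (ZMod 2)) =
      X ^ 2 * eulerSeries (ZMod 2) 16 ^ 3 +
        expand 4 four_ne_zero (oddDivisorSeries (ZMod 2)) := by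
    conv_lhs => rw [oddDivisorSeries_eq_expand_two]
    simp only [map_add, map_mul, map_pow, expand_X, expand_eulerSeries]
    rw [← expand_mul]
  rw [add_assoc, ← hexpand]
  exact oddDivisorSeries_eq_expand_two

theorem mul_eulerSeries_two_pow_three {e : (ZMod 2)⟦X⟧}
    (he : e * eulerSeries (ZMod 2) 3 = eulerSeries (ZMod 2) 1) :
    e * eulerSeries (ZMod 2) 2 ^ 3 =
      expand 4 four_ne_zero (e * eulerSeries (ZMod 2) 1 ^ 3) +
        X * expand 4 four_ne_zero (e * eulerSeries (ZMod 2) 3 ^ 3) := by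
  have hf2 : eulerSeries (ZMod 2) 2 = eulerSeries (ZMod 2) 1 ^ 2 := eulerSeries_two_mul 1
  have hf4 : eulerSeries (ZMod 2) 4 = eulerSeries (ZMod 2) 1 ^ 4 := eulerSeries_four_mul 1
  have hf12 : eulerSeries (ZMod 2) 12 = eulerSeries (ZMod 2) 3 ^ 4 := eulerSeries_four_mul 3
  have he4 : expand 4 four_ne_zero e * eulerSeries (ZMod 2) 12 = eulerSeries (ZMod 2) 4 := by
    simpa only [map_mul, expand_eulerSeries] using congrArg (expand 4 four_ne_zero) he
  have hexpand (k : ℕ) [NeZero k] : expand 4 four_ne_zero (e * eulerSeries (ZMod 2) k ^ 3) =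
      expand 4 four_ne_zero e * eulerSeries (ZMod 2) (4 * k) ^ 3 := by
    rw [map_mul, map_pow, expand_eulerSeries]
  rw [hexpand, hexpand]
  refine (isUnit_eulerSeries (ZMod 2) 12).mul_right_cancel ?_
  calc
    e * eulerSeries (ZMod 2) 2 ^ 3 * eulerSeries (ZMod 2) 12
      = eulerSeries (ZMod 2) 4 * (eulerSeries (ZMod 2) 1 ^ 3 * eulerSeries (ZMod 2) 3 ^ 3) := by
        rw [hf2, hf4, hf12, ← he]
        ring
    _ = eulerSeries (ZMod 2) 4 *
          (eulerSeries (ZMod 2) 4 ^ 3 + X * eulerSeries (ZMod 2) 12 ^ 3) := by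
        rw [eulerSeries_pow_three_mul_eulerSeries_three_pow_three]
    _ = _ := by
        nth_rw 1 [← he4]
        ring

theorem coeff_four_mul_add_one {e : (ZMod 2)⟦X⟧}
    (he : e * eulerSeries (ZMod 2) 3 = eulerSeries (ZMod 2) 1) (n : ℕ) :
    coeff (4 * n + 1) (e * eulerSeries (ZMod 2) 2 ^ 3) =
      (Nat.card {p : ℤ × ℤ // pentagonal p.1 + 6 * pentagonal p.2 = n} : ZMod 2) := by
  have heuler : e * eulerSeries (ZMod 2) 3 ^ 3 =
      weightSeries (ZMod 2) fun p : ℤ × ℤ => 1 * pentagonal p.1 + 6 * pentagonal p.2 := by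
    have h6 : eulerSeries (ZMod 2) 6 = eulerSeries (ZMod 2) 3 ^ 2 := eulerSeries_two_mul 3
    rw [← weightSeries_mul_weightSeries (tendsto_const_mul tendsto_pentagonal)
      (tendsto_const_mul tendsto_pentagonal), ← eulerSeries_eq_weightSeries,
      ← eulerSeries_eq_weightSeries, h6, ← he]
    ring
  have h0 := coeff_X_pow_mul_expand four_ne_zero (r := 0) (s := 1) (by simp) (by simp) n
    (e * eulerSeries (ZMod 2) 1 ^ 3)
  have h1 := coeff_X_pow_mul_expand four_ne_zero (r := 1) (s := 1) (by simp) (by simp) n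
    (e * eulerSeries (ZMod 2) 3 ^ 3)
  rw [pow_zero, one_mul] at h0
  rw [pow_one] at h1
  rw [mul_eulerSeries_two_pow_three he, map_add, h0, h1, heuler, coeff_weightSeries]
  simp

/-- The summands are grouped by the residue modulo four of their exponents. -/
theorem expand_two_sq_mul_eq_dissection (e : (ZMod 2)⟦X⟧) :
    expand 2 two_ne_zero (e ^ 2) * (oddDivisorSeries (ZMod 2) +
        expand 3 three_ne_zero (oddDivisorSeries (ZMod 2))) =
      expand 4 four_ne_zero (e * (oddDivisorSeries (ZMod 2) +
        expand 3 three_ne_zero (oddDivisorSeries (ZMod 2)))) +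
      X * expand 4 four_ne_zero (e * eulerSeries (ZMod 2) 2 ^ 3) +
      X ^ 2 * expand 4 four_ne_zero
        (e * (eulerSeries (ZMod 2) 4 ^ 3 + X * eulerSeries (ZMod 2) 12 ^ 3)) +
      X ^ 3 * expand 4 four_ne_zero (e * eulerSeries (ZMod 2) 6 ^ 3) := by
  set D := oddDivisorSeries (ZMod 2)
  have hD4 : D = X * eulerSeries (ZMod 2) 8 ^ 3 + X ^ 2 * eulerSeries (ZMod 2) 16 ^ 3 +
      expand 4 four_ne_zero D := oddDivisorSeries_eq_expand_four
  have hD12 : expand 3 three_ne_zero D = X ^ 3 * eulerSeries (ZMod 2) 24 ^ 3 +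
      X ^ 6 * eulerSeries (ZMod 2) 48 ^ 3 + expand 4 four_ne_zero (expand 3 three_ne_zero D) := by
    conv_lhs => rw [hD4]
    simp only [map_add, map_mul, map_pow, expand_X, expand_eulerSeries, ← expand_mul, ← pow_mul]
  have he : expand 2 two_ne_zero e ^ 2 = expand 4 four_ne_zero e := by
    rw [expand_two_eq_sq, expand_four_eq_pow_four, ← pow_mul]
  simp only [map_add, map_mul, map_pow, expand_X, expand_eulerSeries]
  linear_combination (D + expand 3 three_ne_zero D) * he + expand 4 four_ne_zero e * (hD4 + hD12)

theorem coeff_sixteen_mul_add_five (e : (ZMod 2)⟦X⟧) (n : ℕ) :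
    coeff (16 * n + 5) (expand 2 two_ne_zero (e ^ 2) *
      (oddDivisorSeries (ZMod 2) +
        expand 3 three_ne_zero (oddDivisorSeries (ZMod 2)))) =
      coeff (4 * n + 1) (e * eulerSeries (ZMod 2) 2 ^ 3) := by
  have hcoeff (r : ℕ) (hr : r < 4) (φ : (ZMod 2)⟦X⟧) : coeff (16 * n + 5)
      (X ^ r * expand 4 four_ne_zero φ) = if r = 1 then coeff (4 * n + 1) φ else 0 := by
    rw [← coeff_X_pow_mul_expand four_ne_zero hr (by simp)]
    congr 2
    ring
  have h0 := hcoeff 0 (by simp)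
  have h1 := hcoeff 1 (by simp)
  simp only [pow_zero, one_mul, pow_one] at h0 h1
  simp only [expand_two_sq_mul_eq_dissection, map_add (coeff _), h0, h1,
    hcoeff 2 (by simp), hcoeff 3 (by simp)]
  simp

/-! ### Euler products and colored partitions -/

section EulerProduct

theorem hasProd_one_add_mul {ι A : Type*} [CommRing A] [TopologicalSpace A] [IsTopologicalRing A]
    {c : A} (hc : c * c = 0) {u : ι → A} {s : A} (hu : HasSum u s) :
    HasProd (fun i => 1 + c * u i) (1 + c * s) := by
  classical
  have hprod (S : Finset ι) : ∏ i ∈ S, (1 + c * u i) = 1 + c * ∑ i ∈ S, u i := by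
    induction S using Finset.induction_on with
    | empty => simp
    | insert i S hi ih =>
      rw [Finset.prod_insert hi, Finset.sum_insert hi, ih]
      linear_combination u i * (∑ i ∈ S, u i) * hc
  unfold HasProd
  simp only [hprod]
  exact (hu.const_mul c).const_add 1

theorem continuous_expand {R : Type*} [CommRing R] [TopologicalSpace R] (k : ℕ) (hk : k ≠ 0) :
    Continuous (expand k hk : R⟦X⟧ →ₐ[R] R⟦X⟧) := by
  refine continuous_iff_continuousAt.2 fun φ => ?_
  refine (WithPiTopology.tendsto_iff_coeff_tendsto R _ _ _).2 fun n => ?_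
  simp only [coeff_expand]
  split_ifs
  · exact (WithPiTopology.continuous_coeff R _).continuousAt
  · exact tendsto_const_nhds

theorem hasProd_eulerSeries {R : Type*} [CommRing R] [TopologicalSpace R] (k : ℕ) [NeZero k] :
    HasProd (fun n => (1 : R⟦X⟧) - X ^ (k * (n + 1))) (eulerSeries R k) := by
  have h := (WithPiTopology.hasProd_one_sub_X_pow R).map (expand k (NeZero.ne k))
    (continuous_expand k (NeZero.ne k))
  simpa only [eulerSeries, comp_def, map_sub, map_one, map_pow, expand_X, ← pow_mul] using h

theorem multipliable_one_sub_X_pow {R : Type*} [CommRing R] [TopologicalSpace R]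
    [IsTopologicalRing R] {α : Type*} {w : α → ℕ} (hpos : ∀ a, 0 < w a)
    (hw : Tendsto w cofinite atTop) : Multipliable fun a => (1 : R⟦X⟧) - X ^ w a := by
  simp only [sub_eq_add_neg]
  refine multipliable_one_add_of_summable_prod
    ((WithPiTopology.summable_iff_summable_coeff R).2 fun n => ?_)
  have hfin : {S : Finset α | (S.val.map w).sum = n}.Finite :=
    finite_fiber_of_tendsto
      ((tendsto_multiset_sum_map hpos hw).comp Finset.val_injective.tendsto_cofinite) n
  refine summable_of_hasFiniteSupport (hfin.subset fun S hS => ?_)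
  by_contra hne
  refine hS ?_
  change coeff n (∏ a ∈ S, -(X : R⟦X⟧) ^ w a) = 0
  rw [Finset.prod_neg, Finset.prod_pow_eq_pow_sum, ← map_one C, ← map_neg, ← map_pow,
    coeff_C_mul, coeff_X_pow, if_neg fun h => hne h.symm, mul_zero]

end EulerProduct

section RegularPart

/-- The positive integers divisible by neither `l` nor `m`. -/
abbrev RegularPart (l m : ℕ) : Type := {j : ℕ // ¬ l ∣ j ∧ ¬ m ∣ j}

theorem card_multiset_regularPart (k l m n : ℕ) :
    Nat.card {M : Multiset (RegularPart l m × Fin k) // (M.map fun x => x.1.1).sum = n} =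
      coloredRegular k l m n := by
  let c : RegularPart l m × Fin k → ℕ × ℕ := fun x => (x.1, x.2)
  have hc : Injective c := fun x y h => by
    simpa [c, Prod.ext_iff, Subtype.ext_iff, Fin.ext_iff] using h
  have hsum (M : Multiset (RegularPart l m × Fin k)) :
      (M.map c).map Prod.fst = M.map fun x => x.1.1 := by
    simp [c, Multiset.map_map]
  have hmem (M : Multiset (RegularPart l m × Fin k)) :
      ∀ x ∈ M.map c, ¬ l ∣ x.1 ∧ ¬ m ∣ x.1 ∧ x.2 < k := by
    intro x hx
    obtain ⟨y, -, rfl⟩ := Multiset.mem_map.1 hx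
    exact ⟨y.1.2.1, y.1.2.2, y.2.2⟩
  have : CanLift (ℕ × ℕ) (RegularPart l m × Fin k) c
      fun x => ¬ l ∣ x.1 ∧ ¬ m ∣ x.1 ∧ x.2 < k :=
    ⟨fun x hx => ⟨(⟨x.1, hx.1, hx.2.1⟩, ⟨x.2, hx.2.2⟩), rfl⟩⟩
  refine Nat.card_eq_of_bijective
    (fun M => ⟨M.1.map c, hmem M, (congrArg _ (hsum M)).trans M.2⟩)
    ⟨fun M N h => Subtype.ext (Multiset.map_injective hc (congrArg Subtype.val h)), ?_⟩
  rintro ⟨M, hM, hn⟩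
  lift M to Multiset (RegularPart l m × Fin k) using hM
  exact ⟨⟨M, (congrArg _ (hsum M)).symm.trans hn⟩, rfl⟩

theorem RegularPart.pos {l m : ℕ} (j : RegularPart l m) : 0 < j.1 :=
  Nat.pos_of_ne_zero fun h => j.2.1 (h ▸ dvd_zero l)

theorem tendsto_comp_fst {ι κ : Type*} [Finite κ] {f : ι → ℕ} (hf : Tendsto f cofinite atTop) :
    Tendsto (fun x : ι × κ => f x.1) cofinite atTop := by
  simpa using tendsto_add_prod hf (g := fun _ : κ => 0) (by simp)

theorem hasProd_ite_dvd {R : Type*} [CommRing R] [TopologicalSpace R] (k : ℕ) [NeZero k] :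
    HasProd (fun j => if k ∣ j ∧ j ≠ 0 then (1 : R⟦X⟧) - X ^ j else 1) (eulerSeries R k) := by
  have hinj : Injective fun n => k * (n + 1) := fun a b h => by simpa [NeZero.ne] using h
  refine (hinj.hasProd_iff fun j hj => if_neg ?_).1 ?_
  · rintro ⟨⟨n, rfl⟩, hn⟩
    exact hj ⟨n - 1, by grind⟩
  · simpa [comp_def, NeZero.ne] using hasProd_eulerSeries k

theorem eulerSeries_mul_of_hasProd_regularPart {R : Type*} [CommRing R] [TopologicalSpace R]
    [IsTopologicalRing R] [T2Space R] {l m : ℕ} [NeZero l] [NeZero m] (hlm : l.Coprime m)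
    {P : R⟦X⟧} (hP : HasProd (fun j : RegularPart l m => (1 : R⟦X⟧) - X ^ j.1) P) :
    P * eulerSeries R l * eulerSeries R m = eulerSeries R 1 * eulerSeries R (l * m) := by
  classical
  have hP' : HasProd ({j | ¬ l ∣ j ∧ ¬ m ∣ j}.mulIndicator fun j => (1 : R⟦X⟧) - X ^ j) P :=
    hasProd_subtype_iff_mulIndicator.1 hP
  refine ((hP'.mul (hasProd_ite_dvd l)).mul (hasProd_ite_dvd m)).unique ?_
  have hright := (hasProd_ite_dvd (R := R) 1).mul (hasProd_ite_dvd (l * m))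
  convert hright using 2 with j
  have hdvd : l * m ∣ j ↔ l ∣ j ∧ m ∣ j :=
    ⟨fun h => ⟨dvd_of_mul_right_dvd h, dvd_of_mul_left_dvd h⟩, fun h =>
      hlm.mul_dvd_of_dvd_of_dvd h.1 h.2⟩
  rcases eq_or_ne j 0 with rfl | hj
  · simp
  · by_cases hl : l ∣ j <;> by_cases hm : m ∣ j <;> simp [hdvd, hl, hm, hj, Set.mulIndicator]

/-- The generating function of `coloredRegular k l m`. -/
noncomputable def coloredRegularSeries (R : Type*) [Semiring R] (k l m : ℕ) : R⟦X⟧ :=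
  PowerSeries.mk fun n => (coloredRegular k l m n : R)

theorem coeff_coloredRegularSeries (R : Type*) [Semiring R] (k l m n : ℕ) :
    coeff n (coloredRegularSeries R k l m) = coloredRegular k l m n :=
  coeff_mk _ _

end RegularPart

theorem coloredRegularSeries_mul {R : Type*} [CommRing R] (k : ℕ) {l m : ℕ} [NeZero l] [NeZero m]
    (hlm : l.Coprime m) :
    coloredRegularSeries R k l m * (eulerSeries R 1 * eulerSeries R (l * m)) ^ k =
      (eulerSeries R l * eulerSeries R m) ^ k := by
  let _ : TopologicalSpace R := ⊥
  have _ : DiscreteTopology R := ⟨rfl⟩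
  have hpos (x : RegularPart l m × Fin k) : 0 < x.1.1 := x.1.pos
  have hval : Tendsto (fun j : RegularPart l m => j.1) cofinite atTop :=
    tendsto_of_injective Subtype.val_injective
  have hw : Tendsto (fun x : RegularPart l m × Fin k => x.1.1) cofinite atTop :=
    tendsto_comp_fst hval
  obtain ⟨P, hP⟩ := multipliable_one_sub_X_pow (R := R) RegularPart.pos hval
  have hPk : HasProd (fun x : RegularPart l m × Fin k => (1 : R⟦X⟧) - X ^ x.1.1) (P ^ k) := by
    have hprod := multipliable_one_sub_X_pow (R := R) hpos hw
    have hfiber := hprod.hasProd.prod_fiberwise fun j => hasProd_fintype _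
    simp only [Finset.prod_const, Finset.card_univ, Fintype.card_fin] at hfiber
    exact hfiber.unique (hP.pow k) ▸ hprod.hasProd
  have hseries : coloredRegularSeries R k l m = weightSeries R
      fun M : Multiset (RegularPart l m × Fin k) => (M.map fun x => x.1.1).sum := by
    ext n
    rw [coeff_weightSeries, card_multiset_regularPart, coeff_coloredRegularSeries]
  have hone : coloredRegularSeries R k l m * P ^ k = 1 :=
    hseries ▸ weightSeries_multiset_mul_eq_one hpos hw hPk
  rw [← eulerSeries_mul_of_hasProd_regularPart hlm hP]
  linear_combination (eulerSeries R l * eulerSeries R m) ^ k * hone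

/-! ### Reduction modulo eight -/

theorem weightSeries_odd_multiples (R : Type*) [Ring R] (d : ℕ) [NeZero d] :
    weightSeries R (fun k => d * (2 * k + 1)) =
      X ^ d + X ^ (2 * d) * weightSeries R fun k => d * (2 * k + 1) := by
  let _ : TopologicalSpace R := ⊥
  have _ : DiscreteTopology R := ⟨rfl⟩
  have hinj : Injective fun k => d * (2 * k + 1) := fun a b h => by simpa [NeZero.ne] using h
  have hsum := hasSum_weightSeries R (tendsto_of_injective hinj)
  have hexp (k : ℕ) : 2 * d + d * (2 * k + 1) = d * (2 * (k + 1) + 1) := by ring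
  have hmul := hsum.mul_left (X ^ (2 * d))
  simp only [← pow_add, hexp] at hmul
  simpa [sub_eq_iff_eq_add'] using ((hasSum_nat_add_iff' 1).2 hsum).unique hmul

section EightTorsion

variable (R : Type*) [CommRing R] [CharP R 8]

theorem eight_eq_zero : (8 : R⟦X⟧) = 0 := by
  exact_mod_cast CharP.cast_eq_zero R⟦X⟧ 8

/-- The factors are matched by `(1 - x) ^ 4 = (1 - x ^ 2) ^ 2 * (1 + 4 * u)`, where
`u = x / (1 - x ^ 2)` is the sum of the odd powers of `x`. -/
theorem eulerSeries_one_pow_four :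
    eulerSeries R 1 ^ 4 = eulerSeries R 2 ^ 2 * (1 + 4 * oddDivisorSeries R) := by
  let _ : TopologicalSpace R := ⊥
  have _ : DiscreteTopology R := ⟨rfl⟩
  let u (j : ℕ) : R⟦X⟧ := weightSeries R fun k => (j + 1) * (2 * k + 1)
  have hu : HasSum u (oddDivisorSeries R) :=
    (hasSum_weightSeries R tendsto_oddDivisorWeight).prod_fiberwise fun j =>
      hasSum_weightSeries R (tendsto_oddDivisorWeight.comp
        (Prod.mk_right_injective j).tendsto_cofinite)
  have h8 := eight_eq_zero R
  have hprod := hasProd_one_add_mul (c := 4) (by linear_combination 2 * h8) hu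
  refine ((hasProd_eulerSeries 1).pow 4).unique ?_
  convert ((hasProd_eulerSeries (R := R) 2).pow 2).mul hprod using 2 with j
  have huj : u j = X ^ (j + 1) + X ^ (2 * (j + 1)) * u j := weightSeries_odd_multiples R (j + 1)
  rw [one_mul, mul_comm 2, pow_mul] at *
  linear_combination -4 * (1 - (X ^ (j + 1)) ^ 2) * huj + ((X ^ (j + 1)) ^ 2 - X ^ (j + 1)) * h8

theorem eulerSeries_three_pow_four :
    eulerSeries R 3 ^ 4 = eulerSeries R 6 ^ 2 *
      (1 + 4 * expand 3 three_ne_zero (oddDivisorSeries R)) := by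
  simpa [expand_eulerSeries, map_ofNat (expand 3 three_ne_zero)] using
    congrArg (expand 3 three_ne_zero) (eulerSeries_one_pow_four R)

variable {R}

theorem coloredRegularSeries_four_three_two {e : R⟦X⟧}
    (he : e * eulerSeries R 3 = eulerSeries R 1) :
    coloredRegularSeries R 4 3 2 = expand 2 two_ne_zero (e ^ 2) *
      (1 + 4 * (oddDivisorSeries R +
        expand 3 three_ne_zero (oddDivisorSeries R))) := by
  set D := oddDivisorSeries R
  have h8 := eight_eq_zero R
  have h1 : eulerSeries R 1 ^ 4 = eulerSeries R 2 ^ 2 * (1 + 4 * D) := eulerSeries_one_pow_four R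
  have h3 : eulerSeries R 3 ^ 4 = eulerSeries R 6 ^ 2 * (1 + 4 * expand 3 three_ne_zero D) :=
    eulerSeries_three_pow_four R
  have he2 : expand 2 two_ne_zero e * eulerSeries R 6 = eulerSeries R 2 := by
    simpa only [map_mul, expand_eulerSeries] using congrArg (expand 2 two_ne_zero) he
  have hF : coloredRegularSeries R 4 3 2 * (eulerSeries R 1 * eulerSeries R 6) ^ 4 =
      (eulerSeries R 3 * eulerSeries R 2) ^ 4 :=
    coloredRegularSeries_mul 4 (by decide)
  have hsq : (1 + 4 * D) ^ 2 = 1 := by linear_combination (D + 2 * D ^ 2) * h8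
  have h2 : IsUnit (eulerSeries R 2 ^ 2) := (isUnit_eulerSeries R 2).pow 2
  have h6 : IsUnit (eulerSeries R 6 ^ 4) := (isUnit_eulerSeries R 6).pow 4
  have hquot : coloredRegularSeries R 4 3 2 * (1 + 4 * D) =
      expand 2 two_ne_zero e ^ 2 * (1 + 4 * expand 3 three_ne_zero D) := by
    refine (h2.mul h6).mul_right_cancel ?_
    rw [mul_pow, mul_pow, h1, h3] at hF
    linear_combination hF - (1 + 4 * expand 3 three_ne_zero D) * eulerSeries R 2 ^ 2 *
      eulerSeries R 6 ^ 2 * (expand 2 two_ne_zero e * eulerSeries R 6 + eulerSeries R 2) * he2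
  rw [map_pow]
  linear_combination (1 + 4 * D) * hquot - coloredRegularSeries R 4 3 2 * hsq +
    2 * expand 2 two_ne_zero e ^ 2 * D * expand 3 three_ne_zero D * h8

end EightTorsion

theorem map_eulerSeries {R S : Type*} [CommRing R] [CommRing S] (φ : R →+* S) (k : ℕ) [NeZero k] :
    PowerSeries.map φ (eulerSeries R k) = eulerSeries S k := by
  have hpentagonal : PowerSeries.map φ (pentagonalSeries R) = pentagonalSeries S := by
    ext n
    by_cases hn : n ∈ Set.range pentagonal
    · obtain ⟨j, rfl⟩ := hn
      simp [coeff_pentagonalSeries_pentagonal]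
    · simp [coeff_pentagonalSeries_eq_zero _ hn]
  rw [eulerSeries, map_expand, hpentagonal, eulerSeries]

theorem four_mul_eq_four_mul_of_castHom_eq {x y : ZMod 8}
    (h : ZMod.castHom (show 2 ∣ 8 by decide) (ZMod 2) x = ZMod.castHom (by decide) (ZMod 2) y) :
    4 * x = 4 * y := by
  revert x y
  decide

/-- In the multiple of `4` only the residue modulo `2` of the coefficient matters. -/
theorem four_mul_coeff_sixteen_mul_add_five {e : (ZMod 8)⟦X⟧}
    (he : e * eulerSeries (ZMod 8) 3 = eulerSeries (ZMod 8) 1) (n : ℕ) :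
    (4 : ZMod 8) * coeff (16 * n + 5) (expand 2 two_ne_zero (e ^ 2) *
      (oddDivisorSeries (ZMod 8) + expand 3 three_ne_zero (oddDivisorSeries (ZMod 8)))) =
      4 * (Nat.card {p : ℤ × ℤ // pentagonal p.1 + 6 * pentagonal p.2 = n} : ZMod 8) := by
  let φ := ZMod.castHom (show 2 ∣ 8 by decide) (ZMod 2)
  have hφ : PowerSeries.map φ e * eulerSeries (ZMod 2) 3 = eulerSeries (ZMod 2) 1 := by
    simpa only [map_mul, map_eulerSeries] using congrArg (PowerSeries.map φ) he
  refine four_mul_eq_four_mul_of_castHom_eq ?_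
  rw [map_natCast, ← coeff_four_mul_add_one hφ, ← coeff_sixteen_mul_add_five, ← coeff_map]
  simp only [map_mul, map_add, map_pow, map_expand, oddDivisorSeries, map_weightSeries, φ]

theorem pentagonal_add_six_mul_pentagonal_eq_iff (k l : ℤ) (n : ℕ) :
    pentagonal k + 6 * pentagonal l = n ↔
      2 * (n : ℤ) = k * (3 * k - 1) + 6 * (l * (3 * l - 1)) := by
  rw [← two_mul_natCast_pentagonal, ← two_mul_natCast_pentagonal]
  lia

end ColoredRegular

open ColoredRegular PowerSeries in
theorem stmt_11_general (n : ℕ) :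
    coloredRegular 4 3 2 (16 * n + 5) ≡
      4 * Nat.card {p : ℤ × ℤ // pentagonal p.1 + 6 * pentagonal p.2 = n} [MOD 8] := by
  obtain ⟨i, hi⟩ := (isUnit_eulerSeries (ZMod 8) 3).exists_left_inv
  let e := eulerSeries (ZMod 8) 1 * i
  have he : e * eulerSeries (ZMod 8) 3 = eulerSeries (ZMod 8) 1 := by rw [mul_assoc, hi, mul_one]
  have heven : coeff (16 * n + 5) (expand 2 two_ne_zero (e ^ 2)) = 0 := by
    rw [coeff_expand, if_neg (by lia)]
  have hfour (φ : (ZMod 8)⟦X⟧) : coeff (16 * n + 5) (4 * φ) = 4 * coeff (16 * n + 5) φ := by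
    rw [← map_ofNat C 4, coeff_C_mul]
  rw [← ZMod.natCast_eq_natCast_iff, ← coeff_coloredRegularSeries,
    coloredRegularSeries_four_three_two he, mul_add, mul_one, map_add, heven, zero_add,
    mul_left_comm, hfour, four_mul_coeff_sixteen_mul_add_five he, Nat.cast_mul, Nat.cast_ofNat]

theorem stmt_11 (n : ℕ)
    (h : ∀ k l : ℤ, 2 * (n : ℤ) ≠ k * (3 * k - 1) + 6 * (l * (3 * l - 1))) :
    coloredRegular 4 3 2 (16 * n + 5) ≡ 0 [MOD 8] := by
  simpa [ColoredRegular.pentagonal_add_six_mul_pentagonal_eq_iff, h] using stmt_11_general n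
end

section
/- Let p ≥ 5 be a prime with (−6/p) = −1 (Legendre symbol). Then for all nonnegative integers k and m with p ∤ m, b^4_{3,2}(16·p^{2k+1}·m + (2·p^{2k+2} + 1)/3) ≡ 0 (mod 8). -/
/-!
Let `F = ∑ aₙ qⁿ` generate the one-colored partitions. Since
`F⁴ = (F₀(q²) + q F₁(q²))⁴`, the odd coefficients of `F⁴` are those of `4 F₀ F₁ F`
modulo `8`, which leaves the parity of `F₀ F₁ F`. Write `U = ∏ (1 - qⁿ)` and `V = ∏ (1 - q³ⁿ)`.
Modulo `2` we have `F = U / V`, and Gauss' identity says that `U³ = ψ := ∑ q ^ (j (j + 1) / 2)`.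
A reflection of the form `x² + 3 y²` cancels the terms of `ψ(q) ψ(q³)` in pairs, leaving
`ψ(q) ψ(q³) = ψ(q⁴) + q ψ(q¹²)`, that is, `U³ V³ = U¹² + q V¹²`. This dissects every series in
sight: `F₀ = U⁵ / V²`, `F₁ = V⁴ / U`, and taking even parts of `F₀ F₁ F = U⁵ V` three times gives
`U · (U³ / V)`. The exponents `n` of `U` make `24 n + 1` a square, those of `U³ / V` are squares
because `t = U³ / V` satisfies `t = t(q⁴) + q U(q²⁴)`. Hence `8` divides the coefficient of
`q ^ (16 n + 1)` in `F⁴` unless `24 n + 1 = c² + 6 (2 d)²`, and this form is anisotropic modulo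
`p` when `(-6 / p) = -1`, so that it represents no integer of odd `p`-adic valuation.
-/

namespace RegularPartition

open PowerSeries Finset

section WeightSeries

variable {ι κ R : Type*}

/-- The generating function `∑ᵢ X ^ w i` of a family of objects with weights `w i : ℕ`. An infinite
fiber of `w` contributes the coefficient `0`. -/
noncomputable def weightSeries (R : Type*) [Semiring R] (w : ι → ℕ) : R⟦X⟧ :=
  .mk fun n ↦ (Nat.card {i // w i = n} : R)

@[simp]
lemma coeff_weightSeries [Semiring R] (w : ι → ℕ) (n : ℕ) :
    coeff n (weightSeries R w) = Nat.card {i // w i = n} :=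
  coeff_mk ..

lemma weightSeries_comp_equiv [Semiring R] (e : ι ≃ κ) (w : κ → ℕ) :
    weightSeries R (w ∘ e) = weightSeries R w := by
  ext n
  simp only [coeff_weightSeries]
  exact congrArg _ (Nat.card_congr (e.subtypeEquiv fun _ ↦ Iff.rfl))

lemma weightSeries_of_unique [Semiring R] [Unique ι] (w : ι → ℕ) :
    weightSeries R w = X ^ w default := by
  ext n
  rw [coeff_weightSeries, coeff_X_pow]
  split_ifs with h
  · have : Unique {i // w i = n} := ⟨⟨⟨default, h.symm⟩⟩, fun i ↦ Subtype.ext (Unique.eq_default _)⟩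
    rw [Nat.card_unique, Nat.cast_one]
  · have : IsEmpty {i // w i = n} := ⟨fun i ↦ h (Unique.eq_default i.1 ▸ i.2).symm⟩
    rw [Nat.card_of_isEmpty, Nat.cast_zero]

/-- A pair of total weight `n` is a splitting of `n` together with one object of each weight. -/
def addFiberEquiv (w : ι → ℕ) (v : κ → ℕ) (n : ℕ) :
    {p : ι × κ // w p.1 + v p.2 = n} ≃
      Σ a : antidiagonal n, {i // w i = a.1.1} × {j // v j = a.1.2} where
  toFun p := ⟨⟨(w p.1.1, v p.1.2), mem_antidiagonal.2 p.2⟩, ⟨p.1.1, rfl⟩, ⟨p.1.2, rfl⟩⟩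
  invFun q := ⟨(q.2.1, q.2.2), by rw [q.2.1.2, q.2.2.2]; exact mem_antidiagonal.1 q.1.2⟩
  left_inv _ := rfl
  right_inv := by
    rintro ⟨⟨⟨a, b⟩, hab⟩, ⟨i, hi⟩, ⟨j, hj⟩⟩
    dsimp only at hi hj
    subst hi hj
    rfl

lemma finite_fiber_add {w : ι → ℕ} {v : κ → ℕ} (hw : ∀ n, Finite {i // w i = n})
    (hv : ∀ n, Finite {j // v j = n}) (n : ℕ) : Finite {p : ι × κ // w p.1 + v p.2 = n} :=
  have := hw
  have := hv
  .of_equiv _ (addFiberEquiv w v n).symm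

lemma weightSeries_mul [Semiring R] {w : ι → ℕ} {v : κ → ℕ} (hw : ∀ n, Finite {i // w i = n})
    (hv : ∀ n, Finite {j // v j = n}) :
    weightSeries R w * weightSeries R v =
      weightSeries R fun p : ι × κ ↦ w p.1 + v p.2 := by
  ext n
  simp only [coeff_mul, coeff_weightSeries]
  rw [Nat.card_congr (addFiberEquiv w v n), Nat.card_sigma, ← sum_coe_sort (antidiagonal n)]
  simp only [Nat.card_prod, Nat.cast_sum, Nat.cast_mul]

lemma weightSeries_sumElim [Semiring R] {w : ι → ℕ} {v : κ → ℕ}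
    (hw : ∀ n, Finite {i // w i = n}) (hv : ∀ n, Finite {j // v j = n}) :
    weightSeries R (Sum.elim w v) = weightSeries R w + weightSeries R v := by
  ext n
  have : Finite {a // Sum.elim w v (Sum.inl a) = n} := hw n
  have : Finite {b // Sum.elim w v (Sum.inr b) = n} := hv n
  simp only [coeff_weightSeries, map_add]
  rw [Nat.card_congr Equiv.subtypeSum, Nat.card_sum, Nat.cast_add]
  rfl

lemma weightSeries_add_one [Semiring R] (w : ι → ℕ) :
    weightSeries R (fun i ↦ w i + 1) = X * weightSeries R w := by
  ext (_ | n) <;> simp [coeff_succ_X_mul]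

lemma weightSeries_const_mul [CommRing R] {m : ℕ} (hm : m ≠ 0) (w : ι → ℕ) :
    weightSeries R (fun i ↦ m * w i) = expand m hm (weightSeries R w) := by
  ext n
  rw [coeff_expand]
  split_ifs with h
  · obtain ⟨n, rfl⟩ := h
    simp [hm]
  · have : IsEmpty {i // m * w i = n} := ⟨fun i ↦ h ⟨w i, i.2.symm⟩⟩
    simp

lemma X_pow_dvd_weightSeries_sub_sum [Ring R] {w : ι → ℕ} {n : ℕ} {s : Finset ι}
    (hs : ∀ i ∉ s, n ≤ w i) : X ^ n ∣ weightSeries R w - ∑ i ∈ s, X ^ w i := by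
  classical
  refine X_pow_dvd_iff.2 fun d hd ↦ ?_
  have fiber_eq : ∀ i, w i = d ↔ i ∈ {i ∈ s | w i = d} := fun i ↦ by
    have := hs i
    grind
  simp only [map_sub, map_sum, coeff_weightSeries, coeff_X_pow, eq_comm (a := d), sum_boole]
  rw [Nat.card_congr (Equiv.subtypeEquivRight fiber_eq), Nat.card_eq_fintype_card,
    Fintype.card_coe, sub_self]

lemma weightSeries_eq_of_involutive [Ring R] [CharP R 2] {w : ι → ℕ}
    (hw : ∀ n, Finite {i // w i = n}) {σ : ι → ι} (hσ : σ.Involutive) (hwσ : ∀ i, w (σ i) = w i)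
    {f : κ → ι} (hf : f.Injective) (hfix : ∀ i, σ i = i ↔ i ∈ Set.range f) :
    weightSeries R w = weightSeries R (w ∘ f) := by
  classical
  ext n
  let : Fintype {i // w i = n} := @Fintype.ofFinite _ (hw n)
  let g : Function.End {i // w i = n} := fun i ↦ ⟨σ i, (hwσ i).trans i.2⟩
  have hg : g ^ 2 ^ 1 = 1 := funext fun i ↦ Subtype.ext (hσ i)
  let e (j : {j // w (f j) = n}) : Function.fixedPoints g :=
    ⟨⟨f j, j.2⟩, Subtype.ext ((hfix _).2 ⟨j, rfl⟩)⟩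
  have he : e.Bijective := by
    refine ⟨fun j k h ↦ Subtype.ext (hf (congrArg (fun x ↦ x.1.1) h)), ?_⟩
    rintro ⟨⟨i, hi⟩, hfixed⟩
    obtain ⟨j, rfl⟩ := (hfix i).1 (congrArg Subtype.val hfixed)
    exact ⟨⟨j, hi⟩, rfl⟩
  simp only [coeff_weightSeries, Function.comp_apply]
  rw [CharP.natCast_eq_natCast R 2, Nat.card_eq_fintype_card, Nat.card_congr (.ofBijective e he),
    Nat.card_eq_fintype_card]
  exact Equiv.Perm.card_fixedPoints_modEq hg

end WeightSeries

section Bisection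

variable {R S : Type*}

/-- The series `∑ a₂ₙ Xⁿ` formed from the even coefficients of `∑ aₙ Xⁿ`. -/
noncomputable def evenPart [Semiring R] (f : R⟦X⟧) : R⟦X⟧ := .mk fun n ↦ coeff (2 * n) f

/-- The series `∑ a₂ₙ₊₁ Xⁿ` formed from the odd coefficients of `∑ aₙ Xⁿ`. -/
noncomputable def oddPart [Semiring R] (f : R⟦X⟧) : R⟦X⟧ := .mk fun n ↦ coeff (2 * n + 1) f

@[simp]
lemma coeff_evenPart [Semiring R] (f : R⟦X⟧) (n : ℕ) : coeff n (evenPart f) = coeff (2 * n) f :=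
  coeff_mk ..

@[simp]
lemma coeff_oddPart [Semiring R] (f : R⟦X⟧) (n : ℕ) : coeff n (oddPart f) = coeff (2 * n + 1) f :=
  coeff_mk ..

lemma evenPart_map [Semiring R] [Semiring S] (φ : R →+* S) (f : R⟦X⟧) :
    evenPart (f.map φ) = (evenPart f).map φ := by
  ext n; simp

lemma oddPart_map [Semiring R] [Semiring S] (φ : R →+* S) (f : R⟦X⟧) :
    oddPart (f.map φ) = (oddPart f).map φ := by
  ext n; simp

variable [CommRing R]

lemma expand_ne_zero {p : ℕ} (hp : p ≠ 0) {f : R⟦X⟧} (hf : f ≠ 0) : expand p hp f ≠ 0 := by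
  contrapose! hf
  ext n
  rw [← coeff_expand_mul p hp, hf, map_zero, map_zero]

lemma evenPart_expand_add (a b : R⟦X⟧) :
    evenPart (expand 2 two_ne_zero a + X * expand 2 two_ne_zero b) = a := by
  ext n
  rw [coeff_evenPart, map_add, coeff_expand_mul, add_eq_left]
  cases n with
  | zero => simp
  | succ n =>
    rw [show 2 * (n + 1) = 2 * n + 1 + 1 by ring, coeff_succ_X_mul,
      coeff_expand_of_not_dvd _ _ _ (by lia)]

lemma oddPart_expand_add (a b : R⟦X⟧) :
    oddPart (expand 2 two_ne_zero a + X * expand 2 two_ne_zero b) = b := by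
  ext n
  rw [coeff_oddPart, map_add, coeff_succ_X_mul, coeff_expand_mul,
    coeff_expand_of_not_dvd _ _ _ (by lia), zero_add]

lemma expand_evenPart_add_X_mul_expand_oddPart (f : R⟦X⟧) :
    expand 2 two_ne_zero (evenPart f) + X * expand 2 two_ne_zero (oddPart f) = f := by
  ext n
  obtain ⟨m, rfl | rfl⟩ := n.even_or_odd'
  · rw [← coeff_evenPart, evenPart_expand_add, coeff_evenPart]
  · rw [← coeff_oddPart, oddPart_expand_add, coeff_oddPart]

lemma expand_mul_eq_expand_add (a f : R⟦X⟧) :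
    expand 2 two_ne_zero a * f = expand 2 two_ne_zero (a * evenPart f) +
      X * expand 2 two_ne_zero (a * oddPart f) := by
  conv_lhs => rw [← expand_evenPart_add_X_mul_expand_oddPart f]
  simp only [map_mul]
  ring

lemma evenPart_expand_mul (a f : R⟦X⟧) :
    evenPart (expand 2 two_ne_zero a * f) = a * evenPart f := by
  rw [expand_mul_eq_expand_add, evenPart_expand_add]

lemma oddPart_expand_mul (a f : R⟦X⟧) :
    oddPart (expand 2 two_ne_zero a * f) = a * oddPart f := by
  rw [expand_mul_eq_expand_add, oddPart_expand_add]

lemma oddPart_pow_four (f : R⟦X⟧) :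
    oddPart (f ^ 4) =
      4 * (evenPart f * oddPart f * (evenPart f ^ 2 + X * oddPart f ^ 2)) := by
  set a := evenPart f with ha
  set b := oddPart f with hb
  have hf : f ^ 4 = expand 2 two_ne_zero (a ^ 4 + 6 * X * a ^ 2 * b ^ 2 + X ^ 2 * b ^ 4) +
      X * expand 2 two_ne_zero (4 * (a * b * (a ^ 2 + X * b ^ 2))) := by
    rw [← expand_evenPart_add_X_mul_expand_oddPart f, ← ha, ← hb]
    simp only [map_add, map_mul, map_pow, expand_X, map_ofNat]
    ring
  rw [hf, oddPart_expand_add]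

end Bisection

section ModTwo

lemma pow_prime_pow_eq_expand (p k : ℕ) [hp : Fact p.Prime] (f : (ZMod p)⟦X⟧) :
    f ^ p ^ k = expand (p ^ k) (pow_ne_zero k hp.out.ne_zero) f := by
  have h := MvPowerSeries.map_iterateFrobenius_expand p hp.out.ne_zero f k
  rw [Subsingleton.elim (iterateFrobenius (ZMod p) p k) (.id _), MvPowerSeries.map_id] at h
  exact h.symm

lemma sq_eq_expand (f : (ZMod 2)⟦X⟧) : f ^ 2 = expand 2 two_ne_zero f :=
  pow_prime_pow_eq_expand 2 1 f

lemma pow_four_eq_expand (f : (ZMod 2)⟦X⟧) : f ^ 4 = expand 4 four_ne_zero f :=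
  pow_prime_pow_eq_expand 2 2 f

lemma pow_eight_eq_expand (f : (ZMod 2)⟦X⟧) : f ^ 8 = expand 8 (by norm_num) f :=
  pow_prime_pow_eq_expand 2 3 f

lemma evenPart_sq_mul (a f : (ZMod 2)⟦X⟧) : evenPart (a ^ 2 * f) = a * evenPart f := by
  rw [sq_eq_expand, evenPart_expand_mul]

lemma oddPart_sq_mul (a f : (ZMod 2)⟦X⟧) : oddPart (a ^ 2 * f) = a * oddPart f := by
  rw [sq_eq_expand, oddPart_expand_mul]

lemma evenPart_sq_add (a b : (ZMod 2)⟦X⟧) : evenPart (a ^ 2 + X * b ^ 2) = a := by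
  rw [sq_eq_expand, sq_eq_expand, evenPart_expand_add]

lemma oddPart_sq_add (a b : (ZMod 2)⟦X⟧) : oddPart (a ^ 2 + X * b ^ 2) = b := by
  rw [sq_eq_expand, sq_eq_expand, oddPart_expand_add]

lemma evenPart_sq (a : (ZMod 2)⟦X⟧) : evenPart (a ^ 2) = a := by
  simpa using evenPart_sq_add a 0

lemma evenPart_sq_add_X_mul_oddPart_sq (f : (ZMod 2)⟦X⟧) :
    evenPart f ^ 2 + X * oddPart f ^ 2 = f := by
  rw [sq_eq_expand, sq_eq_expand, expand_evenPart_add_X_mul_expand_oddPart]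

lemma eight_dvd_coeff_pow_four_iff (F : ℤ⟦X⟧) (n : ℕ) :
    8 ∣ coeff (2 * n + 1) (F ^ 4) ↔
      coeff n (evenPart (F.map (Int.castRingHom (ZMod 2))) *
        oddPart (F.map (Int.castRingHom (ZMod 2))) * F.map (Int.castRingHom (ZMod 2))) = 0 := by
  set f := F.map (Int.castRingHom (ZMod 2)) with hf
  rw [← coeff_oddPart, oddPart_pow_four, ← map_ofNat (C (R := ℤ)), coeff_C_mul]
  rw [show (8 : ℤ) = 4 * 2 by norm_num, mul_dvd_mul_iff_left four_ne_zero]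
  rw [← Nat.cast_ofNat, ← ZMod.intCast_zmod_eq_zero_iff_dvd,
    ← eq_intCast (Int.castRingHom (ZMod 2)), ← coeff_map]
  simp only [map_mul, map_add, map_pow, map_X, ← evenPart_map, ← oddPart_map, ← hf,
    evenPart_sq_add_X_mul_oddPart_sq]

end ModTwo

section Shanks

variable {R : Type*} [CommRing R] (q : R)

/-- The finite product `(1 - q)(1 - q³) ⋯ (1 - q²ⁿ⁻¹)`. -/
def oddProd (n : ℕ) : R := ∏ i ∈ range n, (1 - q ^ (2 * i + 1))

/-- The finite product `(1 - q²ˢ⁺²)(1 - q²ˢ⁺⁴) ⋯ (1 - q²ⁿ)`, equal to `1` when `n ≤ s`. -/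
def evenProd (s n : ℕ) : R := ∏ i ∈ Ico s n, (1 - q ^ (2 * i + 2))

@[simp]
lemma oddProd_zero : oddProd q 0 = 1 :=
  prod_range_zero _

lemma oddProd_succ (n : ℕ) : oddProd q (n + 1) = oddProd q n * (1 - q ^ (2 * n + 1)) :=
  prod_range_succ ..

@[simp]
lemma evenProd_self (n : ℕ) : evenProd q n n = 1 := by
  simp [evenProd]

lemma evenProd_succ_right {s n : ℕ} (h : s ≤ n) :
    evenProd q s (n + 1) = evenProd q s n * (1 - q ^ (2 * n + 2)) :=
  prod_Ico_succ_top h _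

lemma evenProd_eq_mul_succ_left {s n : ℕ} (h : s < n) :
    evenProd q s n = (1 - q ^ (2 * s + 2)) * evenProd q (s + 1) n :=
  prod_eq_prod_Ico_succ_bot h _

lemma oddProd_mul_evenProd (n : ℕ) :
    oddProd q n * evenProd q 0 n = ∏ i ∈ range (2 * n), (1 - q ^ (i + 1)) := by
  induction n with
  | zero => simp
  | succ n ih =>
    rw [oddProd_succ, evenProd_succ_right q n.zero_le, mul_add_one, prod_range_succ,
      prod_range_succ, ← ih]
    ring

/-- The summand `s` of Shanks' identity. -/
def shanksTerm (n s : ℕ) : R := oddProd q s * evenProd q s n * q ^ (s * (2 * n + 1))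

lemma sum_shanksTerm_succ_sub (n m : ℕ) (hm : m ≤ n) :
    ∑ s ∈ range (m + 1), (shanksTerm q (n + 1) s - (1 - q ^ (2 * n + 1)) * shanksTerm q n s) =
      oddProd q (m + 1) * evenProd q m n * q ^ ((m + 1) * (2 * n + 1)) := by
  induction m with
  | zero =>
    simp only [shanksTerm, zero_add, range_one, sum_singleton, evenProd_succ_right q n.zero_le,
      oddProd_succ, oddProd_zero]
    ring
  | succ m ih =>
    rw [sum_range_succ, ih (by lia), shanksTerm, shanksTerm, evenProd_succ_right q hm,
      evenProd_eq_mul_succ_left q (show m < n by lia), oddProd_succ q (m + 1)]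
    ring

/-- Shanks' finite form of Gauss' identity for `∑ q ^ (j (j + 1) / 2)`. -/
lemma oddProd_mul_sum_pow_triangular (n : ℕ) :
    oddProd q n * ∑ j ∈ range (2 * n), q ^ (j * (j + 1) / 2) =
      ∑ s ∈ range n, shanksTerm q n s := by
  induction n with
  | zero => simp
  | succ n ih =>
    have telescoped := sum_shanksTerm_succ_sub q n n le_rfl
    rw [sum_sub_distrib, ← mul_sum, sum_range_succ (shanksTerm q n), ← ih] at telescoped
    have triangular_even : 2 * n * (2 * n + 1) / 2 = n * (2 * n + 1) := by
      rw [mul_assoc, Nat.mul_div_cancel_left _ two_pos]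
    have triangular_odd : (2 * n + 1) * (2 * n + 1 + 1) / 2 = (n + 1) * (2 * n + 1) :=
      Nat.div_eq_of_eq_mul_left two_pos (by ring)
    simp only [shanksTerm, evenProd_self, oddProd_succ] at telescoped ⊢
    rw [mul_add_one, sum_range_succ, sum_range_succ, triangular_even, triangular_odd]
    linear_combination -telescoped

end Shanks

section Gauss

variable (R : Type*) [CommRing R]

lemma X_pow_dvd_prod_sub_pentagonalSeries (n : ℕ) :
    X ^ n ∣ ∏ i ∈ range n, (1 - X ^ (i + 1)) - pentagonalSeries R := by
  refine X_pow_dvd_iff.2 fun d hd ↦ ?_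
  obtain ⟨s, hs⟩ := Filter.eventually_atTop.1 (coeff_prod_one_sub_X_pow_eventually_eq R d)
  nontriviality R
  rw [map_sub, sub_eq_zero, ← hs (s ∪ range n) subset_union_left, ← prod_sdiff subset_union_right,
    mul_comm, coeff_mul_prod_one_sub_of_lt_order]
  intro i hi
  rw [order_X_pow, Nat.cast_lt]
  grind

lemma pentagonalSeries_ne_zero [Nontrivial R] : pentagonalSeries R ≠ 0 := fun h ↦ by
  simpa [h] using X_pow_dvd_iff.1 (X_pow_dvd_prod_sub_pentagonalSeries R 1) 0 one_pos

lemma X_pow_dvd_oddProd_mul_sum_sub_evenProd (n : ℕ) :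
    X ^ n ∣ oddProd (X : R⟦X⟧) n * ∑ j ∈ range (2 * n), X ^ (j * (j + 1) / 2) -
      evenProd X 0 n := by
  rw [oddProd_mul_sum_pow_triangular]
  cases n with
  | zero => simp
  | succ n =>
    rw [sum_range_succ', shanksTerm, oddProd_zero, zero_mul, pow_zero, one_mul, mul_one,
      add_sub_cancel_right]
    refine dvd_sum fun s _ ↦ Dvd.dvd.mul_left (pow_dvd_pow _ ?_) _
    nlinarith

lemma expand_prod_one_sub_X_pow (n : ℕ) :
    expand 2 two_ne_zero (∏ i ∈ range n, (1 - X ^ (i + 1))) = evenProd (X : R⟦X⟧) 0 n := by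
  simp only [evenProd, Nat.Ico_zero_eq_range, map_prod, map_sub, map_one, map_pow, expand_X,
    ← pow_mul, mul_add_one]

lemma pentagonalSeries_mul_weightSeries_triangular :
    pentagonalSeries R * weightSeries R (fun j : ℕ ↦ j * (j + 1) / 2) =
      expand 2 two_ne_zero (pentagonalSeries R) ^ 2 := by
  refine sub_eq_zero.1 (PowerSeries.ext fun d ↦ X_pow_dvd_iff.1 ?_ d d.lt_succ_self)
  generalize d.succ = n
  have partialSum : X ^ n ∣ weightSeries R (fun j : ℕ ↦ j * (j + 1) / 2) -
      ∑ j ∈ range (2 * n), X ^ (j * (j + 1) / 2) := by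
    refine X_pow_dvd_weightSeries_sub_sum fun j hj ↦ ?_
    rw [mem_range, not_lt] at hj
    rw [Nat.le_div_iff_mul_le two_pos]
    nlinarith
  have partialProd : X ^ n ∣ oddProd X n * evenProd X 0 n - pentagonalSeries R := by
    rw [oddProd_mul_evenProd]
    exact (pow_dvd_pow _ (by lia)).trans (X_pow_dvd_prod_sub_pentagonalSeries R (2 * n))
  have partialEvenProd : X ^ n ∣ evenProd X 0 n - expand 2 two_ne_zero (pentagonalSeries R) := by
    have := map_dvd (expand 2 two_ne_zero) (X_pow_dvd_prod_sub_pentagonalSeries R n)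
    rw [map_sub, expand_prod_one_sub_X_pow, map_pow, expand_X, ← pow_mul] at this
    exact (pow_dvd_pow _ (by lia)).trans this
  obtain ⟨a, ha⟩ := partialSum
  obtain ⟨b, hb⟩ := partialProd
  obtain ⟨c, hc⟩ := partialEvenProd
  obtain ⟨e, he⟩ := X_pow_dvd_oddProd_mul_sum_sub_evenProd R n
  set S := ∑ j ∈ range (2 * n), (X : R⟦X⟧) ^ (j * (j + 1) / 2)
  set Q := evenProd (X : R⟦X⟧) 0 n
  exact ⟨pentagonalSeries R * a - b * S + Q * e +
    (Q + expand 2 two_ne_zero (pentagonalSeries R)) * c, by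
    linear_combination pentagonalSeries R * ha - S * hb + Q * he +
      (Q + expand 2 two_ne_zero (pentagonalSeries R)) * hc⟩

end Gauss

section Triangular

/-- The triangular number `2k (2k + 1) / 2`. Over `k : ℤ` every triangular number arises exactly
once, and `8 * triangular k + 1 = (4 * k + 1) ^ 2`. -/
def triangular (k : ℤ) : ℕ := (k * (2 * k + 1)).toNat

@[simp]
lemma natCast_triangular (k : ℤ) : (triangular k : ℤ) = k * (2 * k + 1) :=
  Int.toNat_of_nonneg (by rcases le_or_gt 0 k with h | h <;> nlinarith)

lemma triangular_injective : triangular.Injective := fun k l h ↦ by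
  have h : k * (2 * k + 1) = l * (2 * l + 1) := by
    rw [← natCast_triangular, h, natCast_triangular]
  have : (k - l) * (2 * (k + l) + 1) = 0 := by linear_combination h
  rcases mul_eq_zero.1 this with h | h <;> lia

lemma finite_fiber_of_injective {ι : Type*} {w : ι → ℕ} (hw : w.Injective) (n : ℕ) :
    Finite {i // w i = n} :=
  have : Subsingleton {i // w i = n} :=
    ⟨fun i j ↦ Subtype.ext (hw (i.2.trans j.2.symm))⟩
  inferInstance

lemma weightSeries_triangular (R : Type*) [Semiring R] :
    weightSeries R triangular = weightSeries R fun j : ℕ ↦ j * (j + 1) / 2 := by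
  rw [← weightSeries_comp_equiv Equiv.intEquivNat]
  congr 1
  funext k
  refine (Nat.div_eq_of_eq_mul_left two_pos ?_).symm
  zify
  rw [natCast_triangular]
  rcases k with n | n
  · change (2 * n * (2 * n + 1) : ℤ) = n * (2 * n + 1) * 2
    ring
  · change ((2 * n + 1) * (2 * n + 1 + 1) : ℤ) = Int.negSucc n * (2 * Int.negSucc n + 1) * 2
    rw [Int.negSucc_eq]
    ring

lemma pentagonalSeries_pow_three :
    pentagonalSeries (ZMod 2) ^ 3 = weightSeries (ZMod 2) triangular := by
  have gauss := pentagonalSeries_mul_weightSeries_triangular (ZMod 2)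
  rw [← weightSeries_triangular, ← sq_eq_expand] at gauss
  refine mul_left_cancel₀ (pentagonalSeries_ne_zero _) ?_
  rw [gauss]
  ring

/-- A reflection of the form `x² + 3y²`, where `x = 4k + 1` and `y = 4l + 1` for `p = (k, l)`:
conjugation in `ℤ[√-3]` followed by multiplication by a root of unity, chosen so as to preserve the
congruences modulo `4`. -/
def eisensteinReflection (p : ℤ × ℤ) : ℤ × ℤ :=
  if Even (p.1 - p.2) then ((3 * p.2 - p.1) / 2, (p.1 + p.2) / 2)
  else ((p.1 - 3 * p.2 - 1) / 2, -((1 + p.1 + p.2) / 2))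

lemma eisensteinReflection_even (l b : ℤ) :
    eisensteinReflection (l + 2 * b, l) = (l - b, l + b) := by
  grind [eisensteinReflection]

lemma eisensteinReflection_odd (l b : ℤ) :
    eisensteinReflection (l + 2 * b + 1, l) = (b - l, -(l + b + 1)) := by
  grind [eisensteinReflection]

lemma exists_eq_add_two_mul (p : ℤ × ℤ) :
    ∃ l b : ℤ, p = (l + 2 * b, l) ∨ p = (l + 2 * b + 1, l) := by
  obtain ⟨b, hb | hb⟩ := (p.1 - p.2).even_or_odd'
  · exact ⟨p.2, b, .inl <| Prod.ext (by lia) rfl⟩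
  · exact ⟨p.2, b, .inr <| Prod.ext (by lia) rfl⟩

lemma eisensteinReflection_involutive : eisensteinReflection.Involutive := fun p ↦ by
  grind [eisensteinReflection]

lemma triangular_eisensteinReflection (p : ℤ × ℤ) :
    triangular (eisensteinReflection p).1 + 3 * triangular (eisensteinReflection p).2 =
      triangular p.1 + 3 * triangular p.2 := by
  zify
  simp only [natCast_triangular]
  obtain ⟨l, b, rfl | rfl⟩ := exists_eq_add_two_mul p
  · rw [eisensteinReflection_even]
    ring
  · rw [eisensteinReflection_odd]
    ring

/-- The two lines of fixed points of `eisensteinReflection`. -/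
def eisensteinFixedPoint : ℤ ⊕ ℤ → ℤ × ℤ :=
  Sum.elim (fun l ↦ (l, l)) fun l ↦ (-1 - 3 * l, l)

lemma eisensteinFixedPoint_injective : eisensteinFixedPoint.Injective := by
  rintro (k | k) (l | l) h <;> simp only [eisensteinFixedPoint, Sum.elim_inl, Sum.elim_inr] at h <;>
    grind

lemma eisensteinReflection_eq_self_iff (p : ℤ × ℤ) :
    eisensteinReflection p = p ↔ p ∈ Set.range eisensteinFixedPoint := by
  simp only [eisensteinFixedPoint, Set.mem_range, Sum.exists, Sum.elim_inl, Sum.elim_inr]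
  obtain ⟨l, b, rfl | rfl⟩ := exists_eq_add_two_mul p
  · rw [eisensteinReflection_even]
    simp only [Prod.mk.injEq, exists_eq_right]
    lia
  · rw [eisensteinReflection_odd]
    simp only [Prod.mk.injEq, exists_eq_right]
    lia

lemma weightSeries_triangular_mul_expand_three :
    weightSeries (ZMod 2) triangular * expand 3 three_ne_zero (weightSeries (ZMod 2) triangular) =
      expand 4 four_ne_zero (weightSeries (ZMod 2) triangular) +
        X * expand 12 (by norm_num) (weightSeries (ZMod 2) triangular) := by
  have scaled_injective {m : ℕ} (hm : m ≠ 0) : (fun k ↦ m * triangular k).Injective :=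
    fun k l h ↦ triangular_injective (Nat.eq_of_mul_eq_mul_left (Nat.pos_of_ne_zero hm) h)
  have hfin := finite_fiber_of_injective triangular_injective
  have hfin_three := finite_fiber_of_injective (scaled_injective three_ne_zero)
  have fixed_weight : (fun p ↦ triangular p.1 + 3 * triangular p.2) ∘ eisensteinFixedPoint =
      Sum.elim (fun k ↦ 4 * triangular k) fun k ↦ 12 * triangular k + 1 := by
    funext k
    zify
    rcases k with k | k <;> simp [eisensteinFixedPoint] <;> ring
  rw [← weightSeries_const_mul three_ne_zero, weightSeries_mul hfin hfin_three,
    weightSeries_eq_of_involutive (finite_fiber_add hfin hfin_three)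
      eisensteinReflection_involutive triangular_eisensteinReflection
      eisensteinFixedPoint_injective eisensteinReflection_eq_self_iff,
    fixed_weight, weightSeries_sumElim, weightSeries_add_one, weightSeries_const_mul,
    weightSeries_const_mul]
  · exact finite_fiber_of_injective (scaled_injective four_ne_zero)
  · exact finite_fiber_of_injective fun k l h ↦ by
      exact scaled_injective (m := 12) (by norm_num) (Nat.succ_injective h)

lemma pentagonalSeries_pow_three_mul_expand_three :
    pentagonalSeries (ZMod 2) ^ 3 * expand 3 three_ne_zero (pentagonalSeries (ZMod 2)) ^ 3 =
      pentagonalSeries (ZMod 2) ^ 12 +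
        X * expand 3 three_ne_zero (pentagonalSeries (ZMod 2)) ^ 12 := by
  rw [← map_pow, pentagonalSeries_pow_three, weightSeries_triangular_mul_expand_three,
    ← pow_four_eq_expand, expand_mul 4 four_ne_zero 3 three_ne_zero, ← pow_four_eq_expand,
    ← pentagonalSeries_pow_three, map_pow]
  ring

end Triangular

section Colored

variable {α : Type*} {P : α → Prop} {k : ℕ}

/-- Multisets of elements satisfying `P`, each colored by a natural number less than `k`. -/
abbrev ColoredMultiset (P : α → Prop) (k : ℕ) : Type _ :=
  {M : Multiset (α × ℕ) // ∀ x ∈ M, P x.1 ∧ x.2 < k}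

lemma filter_add_map_prodMk {M : Multiset (α × ℕ)} (hM : ∀ x ∈ M, P x.1 ∧ x.2 < k)
    (N : Multiset α) : (M + N.map (·, k)).filter (fun x ↦ x.2 < k) = M := by
  rw [Multiset.filter_add, Multiset.filter_eq_self.2 fun x hx ↦ (hM x hx).2, add_eq_left,
    Multiset.filter_eq_nil]
  simp

lemma filter_not_add_map_prodMk {M : Multiset (α × ℕ)} (hM : ∀ x ∈ M, P x.1 ∧ x.2 < k)
    (N : Multiset α) : (M + N.map (·, k)).filter (fun x ↦ ¬ x.2 < k) = N.map (·, k) := by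
  refine add_left_cancel (a := M) ?_
  nth_rw 1 [← filter_add_map_prodMk hM N]
  exact Multiset.filter_add_not ..

lemma filter_add_map_fst_filter_not {M : Multiset (α × ℕ)} (hM : ∀ x ∈ M, P x.1 ∧ x.2 < k + 1) :
    M.filter (fun x ↦ x.2 < k) + ((M.filter fun x ↦ ¬ x.2 < k).map Prod.fst).map (·, k) = M := by
  have recolor : ((M.filter fun x ↦ ¬ x.2 < k).map Prod.fst).map (·, k) =
      M.filter fun x ↦ ¬ x.2 < k := by
    rw [Multiset.map_map]
    refine (Multiset.map_congr rfl fun x hx ↦ ?_).trans (Multiset.map_id _)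
    obtain ⟨hx, hk⟩ := Multiset.mem_filter.1 hx
    exact Prod.ext rfl (le_antisymm (not_lt.1 hk) (Nat.lt_succ_iff.1 (hM x hx).2))
  rw [recolor, Multiset.filter_add_not]

/-- Separating the elements of the last color. -/
def splitLastColor (P : α → Prop) (k : ℕ) :
    ColoredMultiset P (k + 1) ≃ ColoredMultiset P k × {N : Multiset α // ∀ a ∈ N, P a} where
  toFun M :=
    (⟨M.1.filter fun x ↦ x.2 < k, fun x hx ↦
        ⟨(M.2 x (Multiset.mem_of_mem_filter hx)).1, (Multiset.mem_filter.1 hx).2⟩⟩,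
      ⟨(M.1.filter fun x ↦ ¬ x.2 < k).map Prod.fst, fun a ha ↦ by
        obtain ⟨x, hx, rfl⟩ := Multiset.mem_map.1 ha
        exact (M.2 x (Multiset.mem_of_mem_filter hx)).1⟩)
  invFun M :=
    ⟨M.1.1 + M.2.1.map (·, k), fun x hx ↦ by
      rcases Multiset.mem_add.1 hx with hx | hx
      · exact (M.1.2 x hx).imp_right Nat.lt_succ_of_lt
      · obtain ⟨a, ha, rfl⟩ := Multiset.mem_map.1 hx
        exact ⟨M.2.2 a ha, k.lt_succ_self⟩⟩
  left_inv M := Subtype.ext (filter_add_map_fst_filter_not M.2)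
  right_inv M := Prod.ext (Subtype.ext (filter_add_map_prodMk M.1.2 _)) <| Subtype.ext <| by
    simp only [filter_not_add_map_prodMk M.1.2, Multiset.map_map, Function.comp_def,
      Multiset.map_id']

variable {P : ℕ → Prop}

lemma sum_splitLastColor_symm
    (M : ColoredMultiset P k × {N : Multiset ℕ // ∀ a ∈ N, P a}) :
    (((splitLastColor P k).symm M).1.map Prod.fst).sum =
      (M.1.1.map Prod.fst).sum + M.2.1.sum := by
  simp [splitLastColor]

instance : Unique (ColoredMultiset P 0) where
  default := ⟨0, by simp⟩
  uniq M := Subtype.ext <|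
    Multiset.eq_zero_of_forall_notMem fun x hx ↦ (M.2 x hx).2.not_ge x.2.zero_le

lemma finite_and_weightSeries_coloredMultiset (R : Type*) [Semiring R]
    (hP : ∀ n, Finite {N : {N : Multiset ℕ // ∀ a ∈ N, P a} // N.1.sum = n}) (k : ℕ) :
    (∀ n, Finite {M : ColoredMultiset P k // (M.1.map Prod.fst).sum = n}) ∧
      weightSeries R (fun M : ColoredMultiset P k ↦ (M.1.map Prod.fst).sum) =
        weightSeries R (fun N : {N : Multiset ℕ // ∀ a ∈ N, P a} ↦ N.1.sum) ^ k := by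
  induction k with
  | zero => exact ⟨fun _ ↦ inferInstance, weightSeries_of_unique _⟩
  | succ k ih =>
    have weight_split : (fun M : ColoredMultiset P (k + 1) ↦ (M.1.map Prod.fst).sum) ∘
        (splitLastColor P k).symm = fun M ↦ (M.1.1.map Prod.fst).sum + M.2.1.sum :=
      funext sum_splitLastColor_symm
    refine ⟨fun n ↦ ?_, ?_⟩
    · have := finite_fiber_add ih.1 hP n
      exact .of_equiv _ <| (splitLastColor P k).symm.subtypeEquiv
        (p := fun M ↦ (M.1.1.map Prod.fst).sum + M.2.1.sum = n) fun M ↦ by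
          rw [sum_splitLastColor_symm]
    · rw [pow_succ, ← ih.2, weightSeries_mul ih.1 hP, ← weight_split, weightSeries_comp_equiv]

/-- Multisets satisfying `P` are the part multisets of partitions, provided `P` excludes `0`. -/
def sumFiberEquivRestricted [DecidablePred P] (hP : ¬ P 0) (n : ℕ) :
    {N : {N : Multiset ℕ // ∀ a ∈ N, P a} // N.1.sum = n} ≃ Nat.Partition.restricted n P where
  toFun N := ⟨⟨N.1.1, fun {i} hi ↦ Nat.pos_of_ne_zero fun h ↦ hP (h ▸ N.1.2 i hi), N.2⟩,
    mem_filter.2 ⟨mem_univ _, N.1.2⟩⟩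
  invFun x := ⟨⟨x.1.parts, (mem_filter.1 x.2).2⟩, x.1.parts_sum⟩
  left_inv _ := rfl
  right_inv _ := rfl

end Colored

section Regular

variable (R : Type*)

/-- The generating function of the partitions into parts divisible by neither `l` nor `m`. -/
noncomputable def regularSeries [Semiring R] (l m : ℕ) : R⟦X⟧ :=
  .mk fun n ↦ (#(Nat.Partition.restricted n fun j ↦ ¬ l ∣ j ∧ ¬ m ∣ j) : R)

lemma regularSeries_map {R S : Type*} [Semiring R] [Semiring S] (φ : R →+* S) (l m : ℕ) :
    (regularSeries R l m).map φ = regularSeries S l m := by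
  ext n
  simp [regularSeries]

lemma mk_coloredRegular [Semiring R] (k l m : ℕ) :
    PowerSeries.mk (fun n ↦ (coloredRegular k l m n : R)) = regularSeries R l m ^ k := by
  let P (j : ℕ) : Prop := ¬ l ∣ j ∧ ¬ m ∣ j
  let e := sumFiberEquivRestricted (P := P) fun h ↦ h.1 (dvd_zero l)
  have regular_eq : weightSeries R (fun N : {N : Multiset ℕ // ∀ a ∈ N, P a} ↦ N.1.sum) =
      regularSeries R l m := by
    ext n
    rw [coeff_weightSeries, Nat.card_congr (e n), Nat.card_eq_fintype_card, Fintype.card_coe,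
      regularSeries, coeff_mk]
  rw [← regular_eq, ← (finite_and_weightSeries_coloredMultiset R
    (fun n ↦ .of_equiv _ (e n).symm) k).2]
  ext n
  rw [coeff_mk, coeff_weightSeries, coloredRegular]
  simp only [← and_assoc]
  exact congrArg _ (Nat.card_congr (Equiv.subtypeSubtypeEquivSubtypeInter _ _).symm)

variable {R} [CommRing R]

open scoped WithPiTopology

lemma continuous_expand [TopologicalSpace R] {p : ℕ} (hp : p ≠ 0) :
    Continuous (expand (R := R) p hp) := by
  refine continuous_iff_continuousAt.2 fun f ↦
    (WithPiTopology.tendsto_iff_coeff_tendsto ..).2 fun d ↦ ?_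
  simp only [coeff_expand]
  split_ifs
  · exact (WithPiTopology.continuous_coeff R _).continuousAt
  · exact tendsto_const_nhds

lemma hasProd_expand_pentagonalSeries [TopologicalSpace R] {p : ℕ} (hp : p ≠ 0) :
    HasProd (fun n ↦ if p ∣ n + 1 then 1 - X ^ (n + 1) else 1)
      (expand p hp (pentagonalSeries R)) := by
  have pred_add_one (n : ℕ) : p * (n + 1) - 1 + 1 = p * (n + 1) :=
    Nat.sub_add_cancel (Nat.mul_pos (Nat.pos_of_ne_zero hp) n.succ_pos)
  have injective : Function.Injective fun n ↦ p * (n + 1) - 1 := fun a b h ↦ by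
    have : p * (a + 1) = p * (b + 1) := by
      rw [← pred_add_one a, ← pred_add_one b]
      exact congrArg (· + 1) h
    exact Nat.succ_injective (Nat.eq_of_mul_eq_mul_left (Nat.pos_of_ne_zero hp) this)
  rw [← injective.hasProd_iff]
  · have h := (WithPiTopology.hasProd_one_sub_X_pow R).map (expand p hp) (continuous_expand hp)
    simpa only [Function.comp_def, pred_add_one, dvd_mul_right, if_true, map_sub, map_one, map_pow,
      expand_X, ← pow_mul] using h
  · rintro n hn
    refine if_neg fun ⟨c, hc⟩ ↦ hn ⟨c - 1, ?_⟩
    have : c ≠ 0 := by rintro rfl; lia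
    dsimp only
    rw [Nat.sub_add_cancel (Nat.pos_of_ne_zero this), ← hc, Nat.add_sub_cancel]

lemma regularSeries_mul_pentagonalSeries {l m : ℕ} (hl : l ≠ 0) (hm : m ≠ 0) (hlm : l.Coprime m) :
    regularSeries R l m * pentagonalSeries R *
        expand (l * m) (mul_ne_zero hl hm) (pentagonalSeries R) =
      expand l hl (pentagonalSeries R) * expand m hm (pentagonalSeries R) := by
  let : TopologicalSpace R := ⊥
  have : DiscreteTopology R := ⟨rfl⟩
  have hregular := Nat.Partition.hasProd_powerSeriesMk_card_restricted R fun j ↦ ¬ l ∣ j ∧ ¬ m ∣ j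
  have hlhs := (hregular.mul (WithPiTopology.hasProd_one_sub_X_pow R)).mul
    (hasProd_expand_pentagonalSeries (mul_ne_zero hl hm))
  have hrhs := (hasProd_expand_pentagonalSeries (R := R) hl).mul
    (hasProd_expand_pentagonalSeries hm)
  have geometric (i : ℕ) : (∑' j : ℕ, (X : R⟦X⟧) ^ ((i + 1) * j)) * (1 - X ^ (i + 1)) = 1 := by
    simp_rw [pow_mul]
    exact WithPiTopology.tsum_pow_mul_one_sub_of_constantCoeff_eq_zero (by simp)
  have mul_dvd_iff (i : ℕ) : l * m ∣ i + 1 ↔ l ∣ i + 1 ∧ m ∣ i + 1 :=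
    ⟨fun h ↦ ⟨dvd_of_mul_right_dvd h, dvd_of_mul_left_dvd h⟩,
      fun h ↦ hlm.mul_dvd_of_dvd_of_dvd h.1 h.2⟩
  have factors_eq (i : ℕ) :
      (if ¬ l ∣ i + 1 ∧ ¬ m ∣ i + 1 then ∑' j : ℕ, (X : R⟦X⟧) ^ ((i + 1) * j) else 1) *
          (1 - X ^ (i + 1)) * (if l * m ∣ i + 1 then 1 - X ^ (i + 1) else 1) =
        (if l ∣ i + 1 then 1 - X ^ (i + 1) else 1) * if m ∣ i + 1 then 1 - X ^ (i + 1) else 1 := by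
    by_cases h₁ : l ∣ i + 1 <;> by_cases h₂ : m ∣ i + 1 <;>
      simp [h₁, h₂, mul_dvd_iff, geometric]
  simp only [factors_eq] at hlhs
  exact hlhs.unique hrhs

lemma regularSeries_mul_expand_three :
    regularSeries (ZMod 2) 3 2 * expand 3 three_ne_zero (pentagonalSeries (ZMod 2)) =
      pentagonalSeries (ZMod 2) := by
  have h := regularSeries_mul_pentagonalSeries (R := ZMod 2) three_ne_zero two_ne_zero
    (by decide)
  rw [expand_mul 3 three_ne_zero 2 two_ne_zero, ← sq_eq_expand, map_pow] at h
  have U_ne_zero := pentagonalSeries_ne_zero (ZMod 2)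
  set U := pentagonalSeries (ZMod 2)
  set V := expand 3 three_ne_zero U
  have V_ne_zero : V ≠ 0 := expand_ne_zero three_ne_zero U_ne_zero
  refine mul_left_cancel₀ (mul_ne_zero U_ne_zero V_ne_zero) ?_
  linear_combination h

end Regular

section Dissection

variable {U V H : (ZMod 2)⟦X⟧} (hUV : U ^ 3 * V ^ 3 = U ^ 12 + X * V ^ 12) (hH : H * V = U)

include hUV

lemma evenPart_pow_three_mul_pow_three : evenPart (U ^ 3 * V ^ 3) = U ^ 6 := by
  rw [hUV, show U ^ 12 + X * V ^ 12 = (U ^ 6) ^ 2 + X * (V ^ 6) ^ 2 by ring, evenPart_sq_add]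

lemma oddPart_pow_three_mul_pow_three : oddPart (U ^ 3 * V ^ 3) = V ^ 6 := by
  rw [hUV, show U ^ 12 + X * V ^ 12 = (U ^ 6) ^ 2 + X * (V ^ 6) ^ 2 by ring, oddPart_sq_add]

include hH

lemma sq_mul_evenPart_of_mul_eq (hU : U ≠ 0) : V ^ 2 * evenPart H = U ^ 5 := by
  refine mul_left_cancel₀ hU ?_
  calc
    U * (V ^ 2 * evenPart H) = evenPart ((U * V ^ 2) ^ 2 * H) := by rw [evenPart_sq_mul, mul_assoc]
    _ = evenPart (U ^ 3 * V ^ 3) := by rw [← hH]; ring_nf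
    _ = U * U ^ 5 := by rw [evenPart_pow_three_mul_pow_three hUV]; ring

lemma mul_oddPart_of_mul_eq (hV : V ≠ 0) : U * oddPart H = V ^ 4 := by
  refine mul_left_cancel₀ (pow_ne_zero 2 hV) ?_
  calc
    V ^ 2 * (U * oddPart H) = oddPart ((U * V ^ 2) ^ 2 * H) := by rw [oddPart_sq_mul]; ring
    _ = oddPart (U ^ 3 * V ^ 3) := by rw [← hH]; ring_nf
    _ = V ^ 2 * V ^ 4 := by rw [oddPart_pow_three_mul_pow_three hUV]; ring

lemma evenPart_mul_oddPart_mul_self (hU : U ≠ 0) (hV : V ≠ 0) :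
    evenPart H * oddPart H * H = U ^ 5 * V := by
  refine mul_left_cancel₀ (mul_ne_zero hU (pow_ne_zero 3 hV)) ?_
  calc
    U * V ^ 3 * (evenPart H * oddPart H * H) =
        (V ^ 2 * evenPart H) * (U * oddPart H) * (H * V) := by ring
    _ = U * V ^ 3 * (U ^ 5 * V) := by
      rw [sq_mul_evenPart_of_mul_eq hUV hH hU, mul_oddPart_of_mul_eq hUV hH hV, hH]
      ring

lemma evenPart_iterate_three (hU : U ≠ 0) (hV : V ≠ 0) :
    evenPart^[3] (evenPart H * oddPart H * H) = U ^ 3 * H := by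
  rw [evenPart_mul_oddPart_mul_self hUV hH hU hV]
  change evenPart (evenPart (evenPart (U ^ 5 * V))) = _
  have first : V * evenPart (U ^ 5 * V) = U ^ 7 := by
    rw [← evenPart_sq_mul, show V ^ 2 * (U ^ 5 * V) = U ^ 2 * (U ^ 3 * V ^ 3) by ring,
      evenPart_sq_mul, evenPart_pow_three_mul_pow_three hUV]
    ring
  have second : V ^ 2 * evenPart (evenPart (U ^ 5 * V)) = U ^ 8 := by
    rw [← evenPart_sq_mul, show (V ^ 2) ^ 2 * evenPart (U ^ 5 * V) =
      (U ^ 2) ^ 2 * (U ^ 3 * V ^ 3) by linear_combination V ^ 3 * first,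
      evenPart_sq_mul, evenPart_pow_three_mul_pow_three hUV]
    ring
  refine mul_left_cancel₀ hV ?_
  rw [← evenPart_sq_mul, second, show U ^ 8 = (U ^ 4) ^ 2 by ring, evenPart_sq]
  linear_combination -U ^ 3 * hH

lemma sq_mul_eq_pow_four_add (hV : V ≠ 0) : U ^ 2 * H = (U ^ 2 * H) ^ 4 + X * V ^ 8 := by
  refine mul_left_cancel₀ (pow_ne_zero 4 hV) ?_
  subst hH
  linear_combination hUV

end Dissection

section QuadraticForm

lemma exists_sq_of_coeff_pentagonalSeries_ne_zero {R : Type*} [CommRing R] {n : ℕ}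
    (h : coeff n (pentagonalSeries R) ≠ 0) : ∃ c : ℤ, 24 * (n : ℤ) + 1 = c ^ 2 := by
  nontriviality R
  rw [Ne, coeff_pentagonalSeries_eq_zero_iff, not_not] at h
  obtain ⟨k, rfl⟩ := h
  exact ⟨6 * k - 1, by linear_combination 12 * two_mul_natCast_pentagonal k⟩

lemma exists_sq_of_eq_expand_four_add {t : (ZMod 2)⟦X⟧}
    (ht : t = expand 4 four_ne_zero t +
      X * expand 24 (by norm_num) (pentagonalSeries (ZMod 2))) (n : ℕ) :
    coeff n t ≠ 0 → ∃ d : ℤ, (n : ℤ) = d ^ 2 := by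
  induction n using Nat.strong_induction_on with
  | _ n ih =>
    intro h
    rcases n with - | n
    · exact ⟨0, by simp⟩
    rw [ht, map_add, coeff_succ_X_mul, coeff_expand, coeff_expand] at h
    split_ifs at h with h₄ h₂₄ h₂₄
    · lia
    · obtain ⟨r, hr⟩ := h₄
      rw [hr, Nat.mul_div_cancel_left _ four_pos, add_zero] at h
      obtain ⟨d, hd⟩ := ih r (by lia) h
      exact ⟨2 * d, by rw [hr]; push_cast; linear_combination 4 * hd⟩
    · obtain ⟨r, rfl⟩ := h₂₄
      rw [Nat.mul_div_cancel_left _ (by norm_num), zero_add] at h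
      obtain ⟨d, hd⟩ := exists_sq_of_coeff_pentagonalSeries_ne_zero h
      exact ⟨d, by push_cast; exact hd⟩
    · simp at h

lemma exists_eq_sq_add_of_coeff_ne_zero {n : ℕ}
    (h : coeff n (pentagonalSeries (ZMod 2) ^ 3 * regularSeries (ZMod 2) 3 2) ≠ 0) :
    ∃ c d : ℤ, (24 * n + 1 : ℤ) = c ^ 2 + 24 * d ^ 2 := by
  set U := pentagonalSeries (ZMod 2)
  set H := regularSeries (ZMod 2) 3 2
  have t_eq : U ^ 2 * H =
      expand 4 four_ne_zero (U ^ 2 * H) + X * expand 24 (by norm_num) U := by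
    have h := sq_mul_eq_pow_four_add pentagonalSeries_pow_three_mul_expand_three
      regularSeries_mul_expand_three (expand_ne_zero three_ne_zero (pentagonalSeries_ne_zero _))
    rwa [pow_four_eq_expand, pow_eight_eq_expand,
      ← expand_mul 8 (by norm_num) 3 three_ne_zero] at h
  rw [pow_succ', mul_assoc, coeff_mul] at h
  obtain ⟨⟨i, j⟩, hij, hne⟩ := exists_ne_zero_of_sum_ne_zero h
  obtain ⟨c, hc⟩ := exists_sq_of_coeff_pentagonalSeries_ne_zero (left_ne_zero_of_mul hne)
  obtain ⟨d, hd⟩ := exists_sq_of_eq_expand_four_add t_eq j (right_ne_zero_of_mul hne)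
  rw [← mem_antidiagonal.1 hij]
  exact ⟨c, d, by push_cast; linear_combination hc + 24 * hd⟩

lemma eight_dvd_coloredRegular {n : ℕ} (h : ∀ c d : ℤ, (24 * n + 1 : ℤ) ≠ c ^ 2 + 24 * d ^ 2) :
    8 ∣ coloredRegular 4 3 2 (16 * n + 1) := by
  set U := pentagonalSeries (ZMod 2)
  set H := regularSeries (ZMod 2) 3 2
  have U_ne_zero : U ≠ 0 := pentagonalSeries_ne_zero _
  have coeff_eq_zero : coeff n (U ^ 3 * H) = 0 := by
    by_contra hne
    obtain ⟨c, d, hcd⟩ := exists_eq_sq_add_of_coeff_ne_zero hne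
    exact h c d hcd
  rw [← evenPart_iterate_three pentagonalSeries_pow_three_mul_expand_three
    regularSeries_mul_expand_three U_ne_zero (expand_ne_zero three_ne_zero U_ne_zero)]
    at coeff_eq_zero
  have coeff_eight_mul : coeff (8 * n) (evenPart H * oddPart H * H) = 0 := by
    simpa only [Function.iterate_succ_apply', Function.iterate_zero, id, coeff_evenPart,
      ← mul_assoc, Nat.reduceMul] using coeff_eq_zero
  have H_eq : H = (regularSeries ℤ 3 2).map (Int.castRingHom (ZMod 2)) :=
    (regularSeries_map _ 3 2).symm
  rw [H_eq, ← eight_dvd_coeff_pow_four_iff,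
    ← mk_coloredRegular, coeff_mk, ← mul_assoc] at coeff_eight_mul
  exact_mod_cast coeff_eight_mul

end QuadraticForm

section Arithmetic

lemma prime_pow_mul_ne_sq_sub {p : ℕ} [Fact p.Prime] {a s : ℤ} (ha : legendreSym p a = -1)
    (hs : ¬ (p : ℤ) ∣ s) (k : ℕ) (c e : ℤ) : (p : ℤ) ^ (2 * k + 1) * s ≠ c ^ 2 - a * e ^ 2 := by
  have p_ne_zero : (p : ℤ) ≠ 0 := mod_cast NeZero.ne p
  have descend {t c e : ℤ} (h : p * t = c ^ 2 - a * e ^ 2) :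
      ∃ c' e' : ℤ, t = p * (c' ^ 2 - a * e' ^ 2) := by
    obtain ⟨⟨c', rfl⟩, ⟨e', rfl⟩⟩ := legendreSym.prime_dvd_of_eq_neg_one ha ⟨t, h.symm⟩
    exact ⟨c', e', mul_left_cancel₀ p_ne_zero (by linear_combination h)⟩
  induction k generalizing c e with
  | zero =>
    intro h
    rw [mul_zero, zero_add, pow_one] at h
    obtain ⟨c', e', hs'⟩ := descend h
    exact hs ⟨_, hs'⟩
  | succ k ih =>
    intro h
    rw [show (p : ℤ) ^ (2 * (k + 1) + 1) * s = p * (p * (p ^ (2 * k + 1) * s)) by ring] at h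
    obtain ⟨c', e', h'⟩ := descend h
    exact ih c' e' (mul_left_cancel₀ p_ne_zero h')

lemma coprime_twenty_four_of_prime {p : ℕ} (hp : p.Prime) (hp5 : 5 ≤ p) : p.Coprime 24 :=
  have coprime_two : p.Coprime 2 := (Nat.coprime_primes hp Nat.prime_two).2 (by lia)
  have coprime_three : p.Coprime 3 := (Nat.coprime_primes hp Nat.prime_three).2 (by lia)
  (coprime_two.pow_right 3).mul_right coprime_three

lemma sq_modEq_one_of_coprime_twenty_four {a : ℕ} (ha : a.Coprime 24) : a ^ 2 ≡ 1 [MOD 24] := by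
  have units_sq : ∀ u : (ZMod 24)ˣ, u ^ 2 = 1 := by decide
  have := congrArg Units.val (units_sq (ZMod.unitOfCoprime a ha))
  rw [← ZMod.natCast_eq_natCast_iff]
  simpa using this

end Arithmetic

end RegularPartition

theorem stmt_12 (p : ℕ) (hp : p.Prime) (hp5 : 5 ≤ p)
    (hleg : @legendreSym p ⟨hp⟩ (-6) = -1) (k m : ℕ) (hm : ¬ p ∣ m) :
    coloredRegular 4 3 2 (16 * p ^ (2 * k + 1) * m + (2 * p ^ (2 * k + 2) + 1) / 3)
      ≡ 0 [MOD 8] := by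
  have : Fact p.Prime := ⟨hp⟩
  have coprime : p.Coprime 24 := RegularPartition.coprime_twenty_four_of_prime hp hp5
  have not_dvd : ¬ (p : ℤ) ∣ 24 * m + p := by
    rw [dvd_add_self_right]
    exact_mod_cast fun h ↦ hm (coprime.dvd_of_dvd_mul_left h)
  obtain ⟨q, hq⟩ : ∃ q, p ^ (2 * k + 2) = 24 * q + 1 := by
    have h := RegularPartition.sq_modEq_one_of_coprime_twenty_four (coprime.pow_left (k + 1))
    rw [← pow_mul, add_one_mul, mul_comm k] at h
    exact ⟨p ^ (2 * k + 2) / 24, by have : _ % _ = _ % _ := h; lia⟩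
  have index_eq : 16 * p ^ (2 * k + 1) * m + (2 * p ^ (2 * k + 2) + 1) / 3 =
      16 * (p ^ (2 * k + 1) * m + q) + 1 := by
    rw [hq, mul_assoc]
    lia
  rw [index_eq, Nat.modEq_zero_iff_dvd]
  refine RegularPartition.eight_dvd_coloredRegular fun c d h ↦
    RegularPartition.prime_pow_mul_ne_sq_sub hleg not_dvd k c (2 * d) ?_
  have hq' : (p : ℤ) ^ (2 * k + 2) = 24 * q + 1 := mod_cast hq
  push_cast at h
  linear_combination h + hq'
end
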